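/- arXiv:1409.6352 — 2 statements merged into one kernel-verified Lean document; each statement's English description precedes it below -/
import Mathlib

section
/- Let f : ℍ → ℝ be continuous, SL(2,ℤ)-invariant, and compactly supported in the quotient. Then lim_{ε→0⁺} ∫₀¹ f(x + iε) dx = (3/π) · ∫_F f(x+iy) · y⁻² dx dy. -/
open MeasureTheory Complex

/-- The standard fundamental domain for `SL(2,ℤ)` acting on the upper half-plane, viewed as a
subset of `ℝ × ℝ` (coordinates `(x, y)` with `z = x + iy`). -/
def fundDom : Set (ℝ × ℝ) :=
  {p | |p.1| < 1 / 2 ∧ 1 < p.1 ^ 2 + p.2 ^ 2 ∧ 0 < p.2}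

/-!
Let `φ` be the restriction of `f ≥ 0` to the fundamental domain, so that `2 f(z) = ∑ φ(γ z)` over
`γ ∈ SL(2,ℤ)` for almost every `z` on a horocycle. Integrating over the closed horocycle of height
`ε` and grouping the `γ` by their first column, which determines `γ` up to an integer translation
of `z`, unfolds the integral over a period into full horocycle integrals:
`2 ∫₀¹ f(x + iε) dx = ε ∑ H(√ε v)`, the sum running over primitive `v ∈ ℤ²`, where `H v` is the
integral of `φ` along the horocycle attached to `v ∈ ℝ²`. As `H` is continuous, compactly supported
and zero near the origin, Riemann sums and Möbius inversion give the limit `ζ(2)⁻¹ ∫ H`, and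
integrating `H` over `ℝ²` amounts to `π` times integration of `φ` against the hyperbolic area.
Altogether the constant is `(6 / π²) * π / 2 = 3 / π`. General `f` is split into positive and
negative parts.
-/

open Filter Topology

section LatticeSums

variable {ι : Type*} {H : (ι → ℝ) → ℝ} {h : ℝ}

/-- The point `h v` of the scaled integer lattice `h ℤ^ι ⊆ ℝ^ι`. -/
def latticePoint (h : ℝ) (v : ι → ℤ) : ι → ℝ := fun i ↦ h * v i

/-- The Riemann sum of `H` over the lattice `h ℤ^ι`, each point weighted by the covolume. -/
noncomputable def latticeSum [Fintype ι] (H : (ι → ℝ) → ℝ) (h : ℝ) : ℝ :=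
  h ^ Fintype.card ι * ∑' v : ι → ℤ, H (latticePoint h v)

lemma latticePoint_zero_right : latticePoint h (0 : ι → ℤ) = 0 := by
  ext i
  simp [latticePoint]

lemma latticePoint_mul_natCast (d : ℕ) (v : ι → ℤ) :
    latticePoint (h * d) v = latticePoint h fun i ↦ d * v i := by
  ext i
  simp [latticePoint, mul_assoc]

lemma tsum_comp_latticePoint_mul_natCast {d : ℕ} (hd : d ≠ 0) :
    ∑' v : ι → ℤ, H (latticePoint (h * d) v) =
      ∑' v, {v : ι → ℤ | ∀ i, (d : ℤ) ∣ v i}.indicator (fun v ↦ H (latticePoint h v)) v := by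
  have injective : Function.Injective fun (v : ι → ℤ) i ↦ (d : ℤ) * v i := fun v w hvw ↦
    funext fun i ↦ mul_left_cancel₀ (Nat.cast_ne_zero.2 hd) (congrFun hvw i)
  have range_eq : Set.range (fun (v : ι → ℤ) i ↦ (d : ℤ) * v i) = {v | ∀ i, (d : ℤ) ∣ v i} := by
    ext v
    refine ⟨?_, fun hv ↦ ?_⟩
    · rintro ⟨w, rfl⟩ i
      exact dvd_mul_right _ _
    · choose w hw using hv
      exact ⟨w, funext fun i ↦ (hw i).symm⟩
  rw [← range_eq, ← tsum_subtype, tsum_range (fun v ↦ H (latticePoint h v)) injective]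
  simp only [latticePoint_mul_natCast]

lemma isClosedEmbedding_latticePoint (hh : h ≠ 0) :
    Topology.IsClosedEmbedding (latticePoint h : (ι → ℤ) → ι → ℝ) :=
  (Homeomorph.smulOfNeZero h hh).isClosedEmbedding.comp
    (Topology.IsClosedEmbedding.piMap fun _ ↦ Int.isClosedEmbedding_coe_real)

lemma hasFiniteSupport_comp_latticePoint [Finite ι] (hs : HasCompactSupport H) (hh : h ≠ 0) :
    (fun v : ι → ℤ ↦ H (latticePoint h v)).HasFiniteSupport :=
  (isCompact_iff_finite.1 (hs.comp_isClosedEmbedding (isClosedEmbedding_latticePoint hh))).subset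
    (subset_tsupport _)

lemma abs_mul_floor_inv_mul_sub_le (hh : 0 < h) (x : ℝ) : |h * ⌊h⁻¹ * x⌋ - x| ≤ h := by
  have error_eq : h * (⌊h⁻¹ * x⌋ : ℝ) - x = -(h * Int.fract (h⁻¹ * x)) := by
    rw [← Int.self_sub_floor]
    field_simp
    ring
  rw [error_eq, abs_neg, abs_of_nonneg (mul_nonneg hh.le (Int.fract_nonneg _))]
  exact mul_le_of_le_one_right hh.le (Int.fract_lt_one _).le

lemma tendsto_latticePoint_floor (x : ι → ℝ) :
    Tendsto (fun h : ℝ ↦ latticePoint h fun i ↦ ⌊h⁻¹ * x i⌋) (𝓝[>] 0) (𝓝 x) := by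
  refine tendsto_pi_nhds.2 fun i ↦ tendsto_iff_dist_tendsto_zero.2 (squeeze_zero'
    (Eventually.of_forall fun _ ↦ dist_nonneg) ?_ (tendsto_nhdsWithin_of_tendsto_nhds tendsto_id))
  filter_upwards [self_mem_nhdsWithin] with h hh using abs_mul_floor_inv_mul_sub_le hh (x i)

variable [Fintype ι]

lemma dist_latticePoint_floor_le (hh : 0 < h) (x : ι → ℝ) :
    dist (latticePoint h fun i ↦ ⌊h⁻¹ * x i⌋) x ≤ h :=
  (dist_pi_le_iff hh.le).2 fun i ↦ abs_mul_floor_inv_mul_sub_le hh (x i)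

lemma map_floor_volume :
    Measure.map (fun (x : ι → ℝ) i ↦ ⌊x i⌋) volume = Measure.count := by
  refine Measure.ext_of_singleton fun v ↦ ?_
  have unit_box : (fun (x : ι → ℝ) i ↦ ⌊x i⌋) ⁻¹' {v} =
      Set.univ.pi fun i ↦ Set.Ico (v i : ℝ) (v i + 1) := by
    ext x
    simp [funext_iff, Int.floor_eq_iff]
  rw [Measure.map_apply (by fun_prop) (measurableSet_singleton v), unit_box, Real.volume_pi_Ico,
    Measure.count_singleton]
  simp

lemma latticeSum_eq_integral (hs : HasCompactSupport H) (hh : 0 < h) :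
    latticeSum H h = ∫ x : ι → ℝ, H (latticePoint h fun i ↦ ⌊h⁻¹ * x i⌋) := by
  have integrable_count : Integrable (fun v : ι → ℤ ↦ H (latticePoint h v)) Measure.count :=
    integrable_count_iff.2
      (summable_of_hasFiniteSupport (hasFiniteSupport_comp_latticePoint hs hh.ne')).norm
  have rescale := Measure.integral_comp_inv_smul_of_nonneg (volume : Measure (ι → ℝ))
    (fun y ↦ H (latticePoint h fun i ↦ ⌊y i⌋)) hh.le
  simp only [Pi.smul_apply, smul_eq_mul, Module.finrank_fintype_fun_eq_card] at rescale
  rw [rescale, latticeSum,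
    ← integral_map (φ := fun (x : ι → ℝ) i ↦ ⌊x i⌋) (f := fun v ↦ H (latticePoint h v))
      (Measurable.aemeasurable (by fun_prop)) (measurable_of_countable _).aestronglyMeasurable,
    map_floor_volume, integral_countable integrable_count]
  simp

lemma norm_comp_latticePoint_floor_le {B R : ℝ} (hB : ∀ x, ‖H x‖ ≤ B) (hh : 0 < h) (hR : h ≤ R)
    (x : ι → ℝ) : ‖H (latticePoint h fun i ↦ ⌊h⁻¹ * x i⌋)‖ ≤
      (Metric.cthickening R (tsupport H)).indicator (fun _ ↦ B) x := by
  by_cases hx : x ∈ Metric.cthickening R (tsupport H)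
  · rw [Set.indicator_of_mem hx]
    exact hB _
  · rw [Set.indicator_of_notMem hx, norm_le_zero_iff]
    refine image_eq_zero_of_notMem_tsupport fun hmem ↦ ?_
    refine hx (Metric.mem_cthickening_of_dist_le _ _ _ _ hmem ?_)
    rw [dist_comm]
    exact (dist_latticePoint_floor_le hh x).trans hR

lemma integrable_indicator_cthickening (hs : HasCompactSupport H) (B R : ℝ) :
    Integrable ((Metric.cthickening R (tsupport H)).indicator fun _ ↦ B) := by
  refine (integrable_indicator_iff Metric.isClosed_cthickening.measurableSet).2 ?_
  exact integrableOn_const hs.isCompact.cthickening.measure_lt_top.ne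

theorem tendsto_latticeSum (hc : Continuous H) (hs : HasCompactSupport H) :
    Tendsto (latticeSum H) (𝓝[>] 0) (𝓝 (∫ x, H x)) := by
  obtain ⟨B, hB⟩ := hs.exists_bound_of_continuous hc
  have small : ∀ᶠ h : ℝ in 𝓝[>] 0, 0 < h ∧ h ≤ 1 := Ioc_mem_nhdsGT one_pos
  have limit : Tendsto (fun h ↦ ∫ x : ι → ℝ, H (latticePoint h fun i ↦ ⌊h⁻¹ * x i⌋)) (𝓝[>] 0)
      (𝓝 (∫ x, H x)) := by
    refine tendsto_integral_filter_of_dominated_convergence _ ?_ ?_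
      (integrable_indicator_cthickening hs B 1) ?_
    · refine Eventually.of_forall fun h ↦ Measurable.aestronglyMeasurable ?_
      exact (measurable_of_countable fun v : ι → ℤ ↦ H (latticePoint h v)).comp (by fun_prop)
    · filter_upwards [small] with h hh
      exact Eventually.of_forall (norm_comp_latticePoint_floor_le hB hh.1 hh.2)
    · exact Eventually.of_forall fun x ↦ (hc.tendsto x).comp (tendsto_latticePoint_floor x)
  refine limit.congr' ?_
  filter_upwards [small] with h hh using (latticeSum_eq_integral hs hh.1).symm

lemma exists_norm_latticeSum_le (hc : Continuous H) (hs : HasCompactSupport H) (h0 : H 0 = 0) :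
    ∃ C, ∀ h, 0 < h → ‖latticeSum H h‖ ≤ C := by
  obtain ⟨B, hB⟩ := hs.exists_bound_of_continuous hc
  obtain ⟨R, hR⟩ := hs.isCompact.isBounded.exists_norm_le
  refine ⟨∫ x, (Metric.cthickening R (tsupport H)).indicator (fun _ ↦ B) x, fun h hh ↦ ?_⟩
  have bound_nonneg : 0 ≤ ∫ x, (Metric.cthickening R (tsupport H)).indicator (fun _ ↦ B) x :=
    integral_nonneg fun x ↦ Set.indicator_nonneg (fun _ _ ↦ (norm_nonneg _).trans (hB 0)) x
  rcases le_or_gt h R with hhR | hRh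
  · rw [latticeSum_eq_integral hs hh]
    exact norm_integral_le_of_norm_le (integrable_indicator_cthickening hs B R)
      (Eventually.of_forall (norm_comp_latticePoint_floor_le hB hh hhR))
  · have term_eq_zero (v : ι → ℤ) : H (latticePoint h v) = 0 := by
      by_cases hv : v = 0
      · rw [hv, latticePoint_zero_right, h0]
      obtain ⟨i, hi⟩ := Function.ne_iff.1 hv
      refine image_eq_zero_of_notMem_tsupport fun hmem ↦ ?_
      have one_le : (1 : ℝ) ≤ |(v i : ℝ)| := by exact_mod_cast Int.one_le_abs hi
      have le_R : h * |(v i : ℝ)| ≤ R := by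
        simpa [latticePoint, abs_mul, abs_of_pos hh] using (norm_le_pi_norm _ i).trans (hR _ hmem)
      nlinarith
    simpa only [latticeSum, term_eq_zero, tsum_zero, mul_zero, norm_zero] using bound_nonneg

end LatticeSums

section PrimitiveLatticeSums

open ArithmeticFunction (moebius)

variable {ι : Type*} [Fintype ι] {H : (ι → ℝ) → ℝ} {h : ℝ}

/-- A primitive integer vector: one whose entries have no common factor. -/
def IsPrimitiveVector (v : ι → ℤ) : Prop := IsUnit (Finset.univ.gcd v)

/-- The part of `latticeSum H h` contributed by the primitive vectors. -/
noncomputable def primitiveSum (H : (ι → ℝ) → ℝ) (h : ℝ) : ℝ :=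
  h ^ Fintype.card ι * ∑' v : {v : ι → ℤ // IsPrimitiveVector v}, H (latticePoint h v)

lemma isPrimitiveVector_fin_two_iff {v : Fin 2 → ℤ} :
    IsPrimitiveVector v ↔ IsCoprime (v 0) (v 1) := by
  have gcd_eq : Finset.univ.gcd v = gcd (v 0) (normalize (v 1)) := by simp [Fin.univ_succ]
  rw [IsPrimitiveVector, gcd_eq, gcd_isUnit_iff, normalize_apply,
    isCoprime_mul_unit_right_right (Units.isUnit _)]

open Classical in
lemma hasSum_indicator_dvd_moebius {v : ι → ℤ} (hv : v ≠ 0) :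
    HasSum ({d : ℕ | ∀ i, (d : ℤ) ∣ v i}.indicator fun d ↦ (moebius d : ℝ))
      (if IsPrimitiveVector v then 1 else 0) := by
  have gcd_ne_zero : (Finset.univ.gcd v).natAbs ≠ 0 := by
    obtain ⟨i, hi⟩ := Function.ne_iff.1 hv
    exact Int.natAbs_ne_zero.2 fun h0 ↦ hi (Finset.gcd_eq_zero_iff.1 h0 i (Finset.mem_univ i))
  have divisors_eq : {d : ℕ | ∀ i, (d : ℤ) ∣ v i} = (Finset.univ.gcd v).natAbs.divisors := by
    ext d
    simp [← Int.natCast_dvd, Finset.dvd_gcd_iff, Int.natAbs_ne_zero.1 gcd_ne_zero]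
  have sum_eq : ∑ d ∈ (Finset.univ.gcd v).natAbs.divisors, (moebius d : ℝ) =
      if IsPrimitiveVector v then 1 else 0 := by
    rw [← Int.cast_sum, ← ArithmeticFunction.coe_mul_zeta_apply,
      ArithmeticFunction.moebius_mul_coe_zeta, ArithmeticFunction.one_apply]
    simp [IsPrimitiveVector, Int.isUnit_iff_natAbs_eq]
  rw [divisors_eq, ← sum_eq, ← hasSum_subtype_iff_indicator]
  exact Finset.hasSum _ _

lemma hasSum_moebius_mul_latticeSum (hs : HasCompactSupport H) (h0 : H 0 = 0) (hh : h ≠ 0) :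
    HasSum (fun d : ℕ ↦ (moebius d : ℝ) / d ^ Fintype.card ι * latticeSum H (h * d))
      (primitiveSum H h) := by
  classical
  obtain ⟨W, hW⟩ := (hasFiniteSupport_comp_latticePoint hs hh).exists_finset_coe
  have eq_zero_of_notMem {v : ι → ℤ} (hv : v ∉ W) : H (latticePoint h v) = 0 := by
    rwa [← Finset.mem_coe, hW, Function.notMem_support] at hv
  have ne_zero_of_mem {v : ι → ℤ} (hv : v ∈ W) : v ≠ 0 := by
    rintro rfl
    rw [← Finset.mem_coe, hW, Function.mem_support, latticePoint_zero_right] at hv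
    exact hv h0
  have tsum_indicator (S : Set (ι → ℤ)) : ∑' v, S.indicator (fun v ↦ H (latticePoint h v)) v =
      ∑ v ∈ W, if v ∈ S then H (latticePoint h v) else 0 := by
    simp only [Set.indicator_apply]
    exact tsum_eq_sum fun v hv ↦ by rw [eq_zero_of_notMem hv, ite_self]
  have primitiveSum_eq : primitiveSum H h = h ^ Fintype.card ι *
      ∑ v ∈ W, (if IsPrimitiveVector v then 1 else 0) * H (latticePoint h v) := by
    simp only [ite_mul, one_mul, zero_mul]
    exact congrArg _ ((tsum_subtype {v : ι → ℤ | IsPrimitiveVector v} _).trans (tsum_indicator _))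
  have term_eq (d : ℕ) : (moebius d : ℝ) / d ^ Fintype.card ι * latticeSum H (h * d) =
      h ^ Fintype.card ι * ∑ v ∈ W, {d : ℕ | ∀ i, (d : ℤ) ∣ v i}.indicator
        (fun d ↦ (moebius d : ℝ)) d * H (latticePoint h v) := by
    rcases eq_or_ne d 0 with rfl | hd
    · simp [Set.indicator_apply]
    rw [latticeSum, tsum_comp_latticePoint_mul_natCast hd, tsum_indicator]
    simp only [Finset.mul_sum, Set.indicator_apply, Set.mem_ofPred_eq, ite_mul, zero_mul, mul_ite,
      mul_zero, mul_pow]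
    field_simp
  simp only [term_eq, primitiveSum_eq]
  exact (hasSum_sum fun v hv ↦
    (hasSum_indicator_dvd_moebius (ne_zero_of_mem hv)).mul_right _).mul_left _

lemma tendsto_mul_nhdsGT_zero {c : ℝ} (hc : 0 < c) :
    Tendsto (fun h : ℝ ↦ h * c) (𝓝[>] 0) (𝓝[>] 0) := by
  refine tendsto_nhdsWithin_iff.2 ⟨tendsto_nhdsWithin_of_tendsto_nhds ?_, ?_⟩
  · simpa using (continuous_mul_const c).tendsto 0
  · filter_upwards [self_mem_nhdsWithin] with h hh using mul_pos hh hc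

theorem tendsto_primitiveSum (hι : 2 ≤ Fintype.card ι) (hc : Continuous H)
    (hs : HasCompactSupport H) (h0 : H 0 = 0) :
    Tendsto (primitiveSum H) (𝓝[>] 0)
      (𝓝 ((∑' d : ℕ, (moebius d : ℝ) / d ^ Fintype.card ι) * ∫ x, H x)) := by
  obtain ⟨C, hC⟩ := exists_norm_latticeSum_le hc hs h0
  have limit : Tendsto (fun h ↦ ∑' d : ℕ, (moebius d : ℝ) / d ^ Fintype.card ι *
      latticeSum H (h * d)) (𝓝[>] 0)
      (𝓝 (∑' d : ℕ, (moebius d : ℝ) / d ^ Fintype.card ι * ∫ x, H x)) := by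
    refine tendsto_tsum_of_dominated_convergence (bound := fun d : ℕ ↦ 1 / d ^ Fintype.card ι * C)
      ((Real.summable_one_div_nat_pow.2 hι).mul_right C) (fun d ↦ ?_) ?_
    · rcases Nat.eq_zero_or_pos d with rfl | hd
      · simp
      exact ((tendsto_latticeSum hc hs).comp
        (tendsto_mul_nhdsGT_zero (Nat.cast_pos.2 hd))).const_mul _
    · filter_upwards [self_mem_nhdsWithin] with h hh d
      have moebius_le : |(moebius d : ℝ)| ≤ 1 := by
        exact_mod_cast ArithmeticFunction.abs_moebius_le_one
      have C_nonneg : 0 ≤ C := (norm_nonneg _).trans (hC 1 one_pos)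
      rcases Nat.eq_zero_or_pos d with rfl | hd
      · rw [ArithmeticFunction.map_zero, Int.cast_zero, zero_div, zero_mul, norm_zero]
        positivity
      rw [norm_mul, norm_div, Real.norm_eq_abs, norm_pow, Real.norm_natCast]
      gcongr
      exact hC _ (mul_pos hh (Nat.cast_pos.2 hd))
  rw [← tsum_mul_right]
  refine limit.congr' ?_
  filter_upwards [self_mem_nhdsWithin] with h hh
  exact (hasSum_moebius_mul_latticeSum hs h0 (ne_of_gt hh)).tsum_eq

lemma tsum_moebius_div_sq : ∑' d : ℕ, (moebius d : ℝ) / d ^ 2 = 6 / Real.pi ^ 2 := by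
  have one_lt_re : (1 : ℝ) < (2 : ℂ).re := by norm_num
  have zeta_mul := ArithmeticFunction.LSeries_zeta_mul_Lseries_moebius one_lt_re
  have LSeries_eq : LSeries (fun n ↦ ((moebius n : ℤ) : ℂ)) 2 =
      ((∑' d : ℕ, (moebius d : ℝ) / d ^ 2 : ℝ) : ℂ) := by
    rw [LSeries, Complex.ofReal_tsum]
    refine tsum_congr fun n ↦ ?_
    rcases eq_or_ne n 0 with rfl | hn
    · simp
    · rw [LSeries.term_of_ne_zero hn]
      norm_cast
  rw [ArithmeticFunction.LSeries_zeta_eq_riemannZeta one_lt_re, riemannZeta_two, LSeries_eq]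
    at zeta_mul
  have real_eq : Real.pi ^ 2 / 6 * ∑' d : ℕ, (moebius d : ℝ) / d ^ 2 = 1 := by
    exact_mod_cast zeta_mul
  rw [← inv_div, eq_inv_of_mul_eq_one_right real_eq]

end PrimitiveLatticeSums

section Horocycles

variable {v : Fin 2 → ℝ}

/-- The automorphy factor `j(g, N (t + i))` of the matrix `g` with rows `(a, -c)` and `(c, a)`,
where `v = (a, c)` and `N = a² + c²`; it is the denominator of `horocycle`. -/
noncomputable def horocycleDenom (v : Fin 2 → ℝ) (t : ℝ) : ℂ :=
  v 1 * ((v 0 ^ 2 + v 1 ^ 2) * (t + I)) + v 0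

/-- The image of the horizontal line `ℝ + i` under the matrix of `SL(2,ℝ)` with first column
`v = (a, c)` and second column `(-c, a) / N`, where `N = a² + c²`. Every other matrix of `SL(2,ℝ)`
with first column `v` yields a translate of this parametrisation. At `v = 0` the value is `0`,
a point outside the upper half-plane. -/
noncomputable def horocycle (v : Fin 2 → ℝ) (t : ℝ) : ℂ :=
  (v 0 * ((v 0 ^ 2 + v 1 ^ 2) * (t + I)) - v 1) / horocycleDenom v t

lemma horocycle_zero_left (t : ℝ) : horocycle 0 t = 0 := by
  simp [horocycle, horocycleDenom]

lemma measurable_horocycle : Measurable (Function.uncurry horocycle) := by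
  unfold Function.uncurry
  unfold horocycle horocycleDenom
  fun_prop

lemma sq_add_sq_pos (hv : v ≠ 0) : 0 < v 0 ^ 2 + v 1 ^ 2 := by
  contrapose! hv
  have entry_zero : v 0 = 0 := by nlinarith [sq_nonneg (v 0), sq_nonneg (v 1)]
  have entry_one : v 1 = 0 := by nlinarith [sq_nonneg (v 0), sq_nonneg (v 1)]
  ext i
  fin_cases i <;> assumption

lemma horocycleDenom_ne_zero (hv : v ≠ 0) (t : ℝ) : horocycleDenom v t ≠ 0 := by
  have norm_pos := sq_add_sq_pos hv
  intro h0
  have im_eq : v 1 * (v 0 ^ 2 + v 1 ^ 2) = 0 := by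
    simpa [horocycleDenom, ← ofReal_pow] using congrArg im h0
  have v_one : v 1 = 0 := (mul_eq_zero.1 im_eq).resolve_right norm_pos.ne'
  have v_zero : v 0 = 0 := by simpa [horocycleDenom, v_one] using h0
  simp [v_zero, v_one] at norm_pos

lemma continuousAt_horocycle (hv : v ≠ 0) (t : ℝ) : ContinuousAt (fun v ↦ horocycle v t) v := by
  unfold horocycle horocycleDenom
  exact ContinuousAt.div (by fun_prop) (by fun_prop) (horocycleDenom_ne_zero hv t)

lemma mul_add_div_mul_add_eq_horocycle {a b c d : ℝ} (hdet : a * d - b * c = 1) (t : ℝ) :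
    ((a : ℂ) * (t + I) + b) / (c * (t + I) + d) =
      horocycle ![a, c] (t + (a * b + c * d) / (a ^ 2 + c ^ 2)) := by
  have hv : ![a, c] ≠ 0 := by
    intro h0
    simp [show a = 0 from congrFun h0 0, show c = 0 from congrFun h0 1] at hdet
  have norm_ne : (a ^ 2 + c ^ 2 : ℂ) ≠ 0 := by exact_mod_cast (sq_add_sq_pos hv).ne'
  have hdet' : (a * d - b * c : ℂ) = 1 := by exact_mod_cast hdet
  have numerator : (a : ℂ) * ((a ^ 2 + c ^ 2) * ((t + (a * b + c * d) / (a ^ 2 + c ^ 2)) + I)) - c =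
      (a ^ 2 + c ^ 2) * (a * (t + I) + b) := by
    field_simp
    linear_combination c * hdet'
  have denominator :
      (c : ℂ) * ((a ^ 2 + c ^ 2) * ((t + (a * b + c * d) / (a ^ 2 + c ^ 2)) + I)) + a =
        (a ^ 2 + c ^ 2) * (c * (t + I) + d) := by
    field_simp
    linear_combination -a * hdet'
  simp only [horocycle, horocycleDenom, Matrix.cons_val_zero, Matrix.cons_val_one]
  push_cast
  rw [numerator, denominator, mul_div_mul_left _ _ norm_ne]

lemma normSq_horocycleDenom (v : Fin 2 → ℝ) (t : ℝ) :
    normSq (horocycleDenom v t) =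
      (v 1 * (v 0 ^ 2 + v 1 ^ 2) * t + v 0) ^ 2 + (v 1 * (v 0 ^ 2 + v 1 ^ 2)) ^ 2 := by
  simp only [horocycleDenom, normSq_apply, ← ofReal_pow, add_re, add_im, mul_re, mul_im, ofReal_re,
    ofReal_im, I_re, I_im, add_zero, zero_add, sub_zero, mul_one, zero_mul]
  ring

lemma normSq_horocycle (v : Fin 2 → ℝ) (t : ℝ) :
    normSq (horocycle v t) =
      ((v 0 * (v 0 ^ 2 + v 1 ^ 2) * t - v 1) ^ 2 + (v 0 * (v 0 ^ 2 + v 1 ^ 2)) ^ 2) /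
        normSq (horocycleDenom v t) := by
  rw [horocycle, map_div₀]
  congr 1
  simp only [normSq_apply, ← ofReal_pow, add_re, add_im, sub_re, sub_im, mul_re, mul_im,
    ofReal_re, ofReal_im, I_re, I_im, add_zero, zero_add, sub_zero, mul_one, zero_mul]
  ring

lemma re_horocycle (v : Fin 2 → ℝ) (t : ℝ) :
    (horocycle v t).re =
      ((v 0 * (v 0 ^ 2 + v 1 ^ 2) * t - v 1) * (v 1 * (v 0 ^ 2 + v 1 ^ 2) * t + v 0) +
          v 0 * v 1 * (v 0 ^ 2 + v 1 ^ 2) ^ 2) /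
        normSq (horocycleDenom v t) := by
  rw [horocycle, div_re, ← add_div]
  congr 1
  simp only [horocycleDenom, ← ofReal_pow, add_re, add_im, sub_re, sub_im, mul_re, mul_im,
    ofReal_re, ofReal_im, I_re, I_im, add_zero, zero_add, sub_zero, mul_one, zero_mul]
  ring

lemma im_horocycle (v : Fin 2 → ℝ) (t : ℝ) :
    (horocycle v t).im = (v 0 ^ 2 + v 1 ^ 2) ^ 2 / normSq (horocycleDenom v t) := by
  rw [horocycle, div_im, ← sub_div]
  congr 1
  simp only [horocycleDenom, ← ofReal_pow, add_re, add_im, sub_re, sub_im, mul_re, mul_im,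
    ofReal_re, ofReal_im, I_re, I_im, add_zero, zero_add, sub_zero, mul_one, zero_mul]
  ring

/- The left-hand side is `2 cosh (dist z i)` at `z = horocycle v t`. -/
lemma one_add_normSq_div_im_horocycle (hv : v ≠ 0) (t : ℝ) :
    (1 + normSq (horocycle v t)) / (horocycle v t).im =
      (v 0 ^ 2 + v 1 ^ 2) * (1 + t ^ 2) + (v 0 ^ 2 + v 1 ^ 2)⁻¹ := by
  have norm_pos := sq_add_sq_pos hv
  have denom_pos := normSq_pos.2 (horocycleDenom_ne_zero hv t)
  rw [im_horocycle, normSq_horocycle]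
  field_simp
  rw [normSq_horocycleDenom]
  ring

lemma horocycle_bounds {C : ℝ} (hv : v ≠ 0) {t : ℝ}
    (hC : (1 + normSq (horocycle v t)) / (horocycle v t).im ≤ C) :
    v 0 ^ 2 + v 1 ^ 2 ≤ C ∧ 1 ≤ C * (v 0 ^ 2 + v 1 ^ 2) ∧ t ∈ Set.Icc (-C) C := by
  have norm_pos := sq_add_sq_pos hv
  rw [one_add_normSq_div_im_horocycle hv] at hC
  have inv_pos : 0 < (v 0 ^ 2 + v 1 ^ 2)⁻¹ := inv_pos.2 norm_pos
  have inv_mul : (v 0 ^ 2 + v 1 ^ 2)⁻¹ * (v 0 ^ 2 + v 1 ^ 2) = 1 := inv_mul_cancel₀ norm_pos.ne'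
  have norm_le : v 0 ^ 2 + v 1 ^ 2 ≤ C := by nlinarith [mul_nonneg norm_pos.le (sq_nonneg t)]
  have inv_le : (v 0 ^ 2 + v 1 ^ 2)⁻¹ ≤ C := by nlinarith [mul_nonneg norm_pos.le (sq_nonneg t)]
  have sq_le : t ^ 2 ≤ C ^ 2 := by
    calc t ^ 2 = (v 0 ^ 2 + v 1 ^ 2)⁻¹ * ((v 0 ^ 2 + v 1 ^ 2) * t ^ 2) := by
          rw [← mul_assoc, inv_mul, one_mul]
      _ ≤ C * C := mul_le_mul inv_le (by linarith) (by positivity) (inv_pos.le.trans inv_le)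
      _ = C ^ 2 := (sq C).symm
  exact ⟨norm_le, by nlinarith, abs_le.1 (abs_le_of_sq_le_sq sq_le (inv_pos.le.trans inv_le))⟩

lemma finite_setOf_quadratic_eq_zero {p q r : ℝ} (hpqr : ¬(p = 0 ∧ q = 0 ∧ r = 0)) :
    {t : ℝ | p * t ^ 2 + q * t + r = 0}.Finite := by
  have ne_zero : (Polynomial.C p * .X ^ 2 + .C q * .X + .C r : Polynomial ℝ) ≠ 0 := by
    intro h0
    refine hpqr ⟨?_, ?_, ?_⟩
    · simpa using congrArg (Polynomial.coeff · 2) h0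
    · simpa using congrArg (Polynomial.coeff · 1) h0
    · simpa using congrArg (Polynomial.coeff · 0) h0
  refine (Polynomial.finite_setOfPred_isRoot ne_zero).subset fun t ht ↦ ?_
  simpa [Polynomial.IsRoot] using ht

/- The equation pulls back to a quadratic equation in `t` which is not identically satisfied: after
subtracting its leading coefficient from its constant term, its discriminant is `B² - 4AC` times a
nonzero factor. -/
lemma ae_horocycle_notMem_geodesic {A B C : ℝ} (hdisc : B ^ 2 - 4 * A * C ≠ 0) (hv : v ≠ 0) :
    ∀ᵐ t : ℝ, A * normSq (horocycle v t) + B * (horocycle v t).re + C ≠ 0 := by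
  have norm_pos := sq_add_sq_pos hv
  set N := v 0 ^ 2 + v 1 ^ 2 with hN
  set p := N ^ 2 * (A * v 0 ^ 2 + B * v 0 * v 1 + C * v 1 ^ 2) with hp
  set q := N * (B * (v 0 ^ 2 - v 1 ^ 2) - 2 * A * v 0 * v 1 + 2 * C * v 0 * v 1) with hq
  set r := A * v 1 ^ 2 - B * v 0 * v 1 + C * v 0 ^ 2 + p with hr
  have discriminant : q ^ 2 - 4 * p * (r - p) = N ^ 4 * (B ^ 2 - 4 * A * C) := by
    rw [hr, hp, hq, hN]
    ring
  have not_all_zero : ¬(p = 0 ∧ q = 0 ∧ r = 0) := by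
    rintro ⟨hp0, hq0, -⟩
    rw [hp0, hq0] at discriminant
    exact mul_ne_zero (pow_ne_zero 4 norm_pos.ne') hdisc (by rw [← discriminant]; ring)
  filter_upwards [(finite_setOf_quadratic_eq_zero not_all_zero).countable.ae_notMem volume]
    with t ht h0
  refine ht ?_
  have denom_pos := normSq_pos.2 (horocycleDenom_ne_zero hv t)
  rw [normSq_horocycle, re_horocycle] at h0
  field_simp at h0
  rw [normSq_horocycleDenom] at h0
  rw [hr, hp, hq]
  linear_combination h0

end Horocycles

section HorocycleIntegral

variable {φ : ℂ → ℝ}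

/-- The integral of `φ` along the horocycle attached to `v`. -/
noncomputable def horocycleIntegral (φ : ℂ → ℝ) (v : Fin 2 → ℝ) : ℝ := ∫ t : ℝ, φ (horocycle v t)

/-- Bounded measurable functions which are continuous at almost every point of every horocycle and
vanish off a compact subset of the upper half-plane. Compactness is encoded through
`2 cosh (dist z i) = (1 + |z|²) / im z`, since boundedness of this quantity is what horocycles
control directly. -/
structure IsHorocycleTestFunction (φ : ℂ → ℝ) : Prop where
  measurable : Measurable φ
  bounded : ∃ B, ∀ z, ‖φ z‖ ≤ B
  ae_continuousAt : ∀ v : Fin 2 → ℝ, v ≠ 0 → ∀ᵐ t : ℝ, ContinuousAt φ (horocycle v t)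
  im_pos : ∀ z, φ z ≠ 0 → 0 < z.im
  compact : ∃ C, ∀ z, φ z ≠ 0 → (1 + normSq z) / z.im ≤ C

namespace IsHorocycleTestFunction

lemma measurable_comp_horocycle (hφ : IsHorocycleTestFunction φ) (v : Fin 2 → ℝ) :
    Measurable fun t ↦ φ (horocycle v t) :=
  hφ.measurable.comp (measurable_horocycle.of_uncurry_left)

lemma comp_horocycle_zero (hφ : IsHorocycleTestFunction φ) (t : ℝ) : φ (horocycle 0 t) = 0 := by
  by_contra hne
  simpa [horocycle_zero_left] using hφ.im_pos _ hne

lemma exists_bounds_of_comp_horocycle_ne_zero (hφ : IsHorocycleTestFunction φ) :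
    ∃ C, ∀ v t, φ (horocycle v t) ≠ 0 →
      v 0 ^ 2 + v 1 ^ 2 ≤ C ∧ 1 ≤ C * (v 0 ^ 2 + v 1 ^ 2) ∧ t ∈ Set.Icc (-C) C := by
  obtain ⟨C, hC⟩ := hφ.compact
  refine ⟨C, fun v t hne ↦ horocycle_bounds ?_ (hC _ hne)⟩
  rintro rfl
  exact hne (hφ.comp_horocycle_zero t)

lemma exists_integrable_bound (hφ : IsHorocycleTestFunction φ) :
    ∃ b : ℝ → ℝ, Integrable b ∧ ∀ v t, ‖φ (horocycle v t)‖ ≤ b t := by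
  obtain ⟨B, hB⟩ := hφ.bounded
  obtain ⟨C, hC⟩ := hφ.exists_bounds_of_comp_horocycle_ne_zero
  refine ⟨(Set.Icc (-C) C).indicator fun _ ↦ B,
    (integrable_indicator_iff measurableSet_Icc).2 (by simp), fun v t ↦ ?_⟩
  by_cases ht : t ∈ Set.Icc (-C) C
  · rw [Set.indicator_of_mem ht]
    exact hB _
  · rw [Set.indicator_of_notMem ht, norm_le_zero_iff]
    exact not_not.1 fun hne ↦ ht (hC v t hne).2.2

lemma integrable_comp_horocycle (hφ : IsHorocycleTestFunction φ) (v : Fin 2 → ℝ) :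
    Integrable fun t ↦ φ (horocycle v t) := by
  obtain ⟨b, hb, hle⟩ := hφ.exists_integrable_bound
  exact hb.mono' (hφ.measurable_comp_horocycle v).aestronglyMeasurable (.of_forall (hle v))

lemma horocycleIntegral_zero (hφ : IsHorocycleTestFunction φ) : horocycleIntegral φ 0 = 0 := by
  simp [horocycleIntegral, hφ.comp_horocycle_zero]

lemma eventually_comp_horocycle_eq_zero (hφ : IsHorocycleTestFunction φ) (t : ℝ) :
    ∀ᶠ v in 𝓝 0, φ (horocycle v t) = 0 := by
  obtain ⟨C, hC⟩ := hφ.exists_bounds_of_comp_horocycle_ne_zero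
  have near_zero : ∀ᶠ v : Fin 2 → ℝ in 𝓝 0, C * (v 0 ^ 2 + v 1 ^ 2) < 1 :=
    ContinuousAt.eventually_lt (by fun_prop) continuousAt_const (by simp)
  filter_upwards [near_zero] with v hv
  exact not_not.1 fun hne ↦ hv.not_ge (hC v t hne).2.1

lemma ae_continuousAt_comp_horocycle (hφ : IsHorocycleTestFunction φ) (v : Fin 2 → ℝ) :
    ∀ᵐ t : ℝ, ContinuousAt (fun v ↦ φ (horocycle v t)) v := by
  rcases eq_or_ne v 0 with rfl | hv
  · exact .of_forall fun t ↦
      continuousAt_const.congr (EventuallyEq.symm (hφ.eventually_comp_horocycle_eq_zero t))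
  · filter_upwards [hφ.ae_continuousAt v hv] with t ht
    exact ContinuousAt.comp (f := fun v ↦ horocycle v t) ht (continuousAt_horocycle hv t)

lemma continuous_horocycleIntegral (hφ : IsHorocycleTestFunction φ) :
    Continuous (horocycleIntegral φ) := by
  obtain ⟨b, hb, hle⟩ := hφ.exists_integrable_bound
  refine continuous_iff_continuousAt.2 fun v ↦ continuousAt_of_dominated ?_ ?_ hb
    (hφ.ae_continuousAt_comp_horocycle v)
  · exact .of_forall fun v ↦ (hφ.measurable_comp_horocycle v).aestronglyMeasurable
  · exact .of_forall fun v ↦ .of_forall (hle v)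

lemma hasCompactSupport_horocycleIntegral (hφ : IsHorocycleTestFunction φ) :
    HasCompactSupport (horocycleIntegral φ) := by
  obtain ⟨C, hC⟩ := hφ.exists_bounds_of_comp_horocycle_ne_zero
  refine HasCompactSupport.intro (isCompact_closedBall 0 √C) fun v hv ↦ ?_
  have vanish (t : ℝ) : φ (horocycle v t) = 0 := by
    by_contra hne
    have norm_le := (hC v t hne).1
    refine hv (mem_closedBall_zero_iff.2 ((pi_norm_le_iff_of_nonneg (Real.sqrt_nonneg C)).2 ?_))
    intro i
    refine Real.abs_le_sqrt ?_
    fin_cases i <;> simp only [Fin.zero_eta, Fin.mk_one] <;>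
      nlinarith [sq_nonneg (v 0), sq_nonneg (v 1)]
  simp [horocycleIntegral, vanish]

theorem tendsto_primitiveSum_horocycleIntegral (hφ : IsHorocycleTestFunction φ) :
    Tendsto (primitiveSum (horocycleIntegral φ)) (𝓝[>] 0)
      (𝓝 (6 / Real.pi ^ 2 * ∫ v, horocycleIntegral φ v)) := by
  simpa only [Fintype.card_fin, tsum_moebius_div_sq] using
    tendsto_primitiveSum (Fintype.card_fin 2).ge hφ.continuous_horocycleIntegral
      hφ.hasCompactSupport_horocycleIntegral hφ.horocycleIntegral_zero

end IsHorocycleTestFunction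

end HorocycleIntegral

section HyperbolicArea

lemma lintegral_comp_div_add {F : ℝ → ENNReal} (hF : Measurable F) {c : ℝ} (hc : c ≠ 0) (s : ℝ) :
    ∫⁻ x, F (x / c + s) = ENNReal.ofReal |c| * ∫⁻ x, F x := by
  have dilate : ∫⁻ x, F (c⁻¹ * x + s) = ∫⁻ y, F (y + s) ∂(Measure.map (c⁻¹ * ·) volume) := by
    rw [lintegral_map (by fun_prop) (by fun_prop)]
  rw [Real.map_volume_mul_left (inv_ne_zero hc), lintegral_smul_measure,
    lintegral_add_right_eq_self F s, inv_inv] at dilate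
  simpa only [div_eq_inv_mul, smul_eq_mul] using dilate

lemma lintegral_comp_abs (F : ℝ → ENNReal) : ∫⁻ x, F |x| = 2 * ∫⁻ x in Set.Ioi 0, F x := by
  have positive : ∫⁻ x in Set.Ioi 0, F |x| = ∫⁻ x in Set.Ioi 0, F x :=
    setLIntegral_congr_fun measurableSet_Ioi fun x hx ↦ by rw [abs_of_pos hx]
  have negative : ∫⁻ x in Set.Iio 0, F |x| = ∫⁻ x in Set.Ioi 0, F |x| := by
    simpa using (Measure.measurePreserving_neg (volume : Measure ℝ)).setLIntegral_comp_preimage_emb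
      (MeasurableEquiv.neg ℝ).measurableEmbedding (fun x ↦ F |x|) (Set.Ioi 0)
  rw [← lintegral_add_compl _ (measurableSet_Ioi (a := (0 : ℝ))), Set.compl_Ioi,
    setLIntegral_congr Iio_ae_eq_Iic.symm, negative, positive, two_mul]

lemma image_inv_mul_sq_Ioi {k : ℝ} (hk : 0 < k) :
    (fun c : ℝ ↦ (k * c ^ 2)⁻¹) '' Set.Ioi 0 = Set.Ioi 0 := by
  ext y
  constructor
  · rintro ⟨c, hc, rfl⟩
    exact inv_pos.2 (mul_pos hk (pow_pos hc 2))
  · intro (hy : 0 < y)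
    refine ⟨√(k * y)⁻¹, Real.sqrt_pos.2 (by positivity), ?_⟩
    dsimp only
    rw [Real.sq_sqrt (by positivity)]
    field_simp

lemma lintegral_Ioi_comp_inv_mul_sq (M : ℝ → ENNReal) {k : ℝ} (hk : 0 < k) :
    ∫⁻ y in Set.Ioi 0, M y * ENNReal.ofReal (1 / y ^ 2) =
      ENNReal.ofReal (2 * k) * ∫⁻ c in Set.Ioi 0, ENNReal.ofReal c * M (k * c ^ 2)⁻¹ := by
  have derivative : ∀ c ∈ Set.Ioi (0 : ℝ), HasDerivWithinAt (fun c : ℝ ↦ (k * c ^ 2)⁻¹)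
      (-(2 / (k * c ^ 3))) (Set.Ioi 0) c := by
    intro c (hc : 0 < c)
    refine ((((hasDerivAt_pow 2 c).const_mul k).inv (by positivity)).congr_deriv
      ?_).hasDerivWithinAt
    push_cast
    field_simp
  have antitone : AntitoneOn (fun c : ℝ ↦ (k * c ^ 2)⁻¹) (Set.Ioi 0) := by
    intro x (hx : 0 < x) y _ hxy
    dsimp only
    gcongr
  rw [← image_inv_mul_sq_Ioi hk, lintegral_image_eq_lintegral_deriv_mul_of_antitoneOn
    measurableSet_Ioi derivative antitone, image_inv_mul_sq_Ioi hk,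
    ← lintegral_const_mul' _ _ ENNReal.ofReal_ne_top]
  refine setLIntegral_congr_fun measurableSet_Ioi fun c (hc : 0 < c) ↦ ?_
  have jacobian : 2 / (k * c ^ 3) * (1 / (k * c ^ 2)⁻¹ ^ 2) = 2 * k * c := by field_simp
  rw [neg_neg, ← mul_assoc (ENNReal.ofReal (2 * k)), ← ENNReal.ofReal_mul (by positivity),
    ← jacobian, ENNReal.ofReal_mul (by positivity)]
  ring

lemma lintegral_abs_mul_comp_inv_mul_sq (M : ℝ → ENNReal) {k : ℝ} (hk : 0 < k) :
    ∫⁻ c : ℝ, ENNReal.ofReal |c| * M (k * c ^ 2)⁻¹ =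
      ENNReal.ofReal k⁻¹ * ∫⁻ y in Set.Ioi 0, M y * ENNReal.ofReal (1 / y ^ 2) := by
  have even := lintegral_comp_abs fun c ↦ ENNReal.ofReal c * M (k * c ^ 2)⁻¹
  simp only [sq_abs] at even
  rw [even, lintegral_Ioi_comp_inv_mul_sq M hk, ← mul_assoc, ← ENNReal.ofReal_mul (by positivity)]
  congr 1
  rw [← ENNReal.ofReal_ofNat]
  congr 1
  field_simp

variable {ψ : ℂ → ENNReal}

/- For `c ≠ 0` the matrix with rows `(a, -1/c)` and `(c, 0)` has first column `(a, c)`. -/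
lemma lintegral_comp_horocycle_eq_chart (ψ : ℂ → ENNReal) (a : ℝ) {c : ℝ} (hc : c ≠ 0) :
    ∫⁻ t, ψ (horocycle ![a, c] t) =
      ∫⁻ t : ℝ, ψ ((a / c + -(t / ((1 + t ^ 2) * c ^ 2)) : ℝ) +
        (((1 + t ^ 2) * c ^ 2)⁻¹ : ℝ) * I) := by
  have hdet : a * 0 - (-1 / c) * c = 1 := by
    field_simp
    ring
  rw [← lintegral_add_right_eq_self _ ((a * (-1 / c) + c * 0) / (a ^ 2 + c ^ 2))]
  refine lintegral_congr fun t ↦ congrArg ψ ?_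
  rw [← mul_add_div_mul_add_eq_horocycle hdet]
  have hc' : (c : ℂ) ≠ 0 := ofReal_ne_zero.2 hc
  have norm_ne : (1 + t ^ 2 : ℂ) ≠ 0 := by exact_mod_cast (by positivity : (1 + t ^ 2 : ℝ) ≠ 0)
  have factor : (t + I : ℂ) * (t - I) = 1 + t ^ 2 := by linear_combination -I_sq
  have add_ne : (t + I : ℂ) ≠ 0 := left_ne_zero_of_mul (factor ▸ norm_ne)
  push_cast
  field_simp
  linear_combination (c : ℂ) * factor

lemma lintegral_horocycle_fixed_entry (hψ : Measurable ψ) {c : ℝ} (hc : c ≠ 0) :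
    ∫⁻ a : ℝ, ∫⁻ t, ψ (horocycle ![a, c] t) =
      ∫⁻ t : ℝ, ENNReal.ofReal |c| *
        ∫⁻ x : ℝ, ψ (x + (((1 + t ^ 2) * c ^ 2)⁻¹ : ℝ) * I) := by
  simp_rw [lintegral_comp_horocycle_eq_chart ψ _ hc]
  have measurable_chart : Measurable fun p : ℝ × ℝ ↦
      ψ ((p.1 / c + -(p.2 / ((1 + p.2 ^ 2) * c ^ 2)) : ℝ) +
        (((1 + p.2 ^ 2) * c ^ 2)⁻¹ : ℝ) * I) := by fun_prop
  rw [lintegral_lintegral_swap measurable_chart.aemeasurable]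
  refine lintegral_congr fun t ↦ ?_
  exact lintegral_comp_div_add (F := fun x : ℝ ↦ ψ (x + (((1 + t ^ 2) * c ^ 2)⁻¹ : ℝ) * I))
    (hψ.comp (by fun_prop)) hc _

lemma setLIntegral_upperHalfPlane_eq (hψ : Measurable ψ) :
    ∫⁻ p in {p : ℝ × ℝ | 0 < p.2}, ψ (p.1 + p.2 * I) * ENNReal.ofReal (1 / p.2 ^ 2) =
      ∫⁻ y in Set.Ioi (0 : ℝ), (∫⁻ x : ℝ, ψ (x + y * I)) * ENNReal.ofReal (1 / y ^ 2) := by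
  have half_plane : {p : ℝ × ℝ | 0 < p.2} = Set.univ ×ˢ Set.Ioi 0 := by
    ext p
    simp
  rw [half_plane, Measure.volume_eq_prod, ← Measure.prod_restrict, Measure.restrict_univ,
    lintegral_prod_symm _ (by fun_prop)]
  refine lintegral_congr fun y ↦ ?_
  exact lintegral_mul_const (f := fun x : ℝ ↦ ψ (x + y * I)) (ENNReal.ofReal (1 / y ^ 2))
    (by fun_prop)

theorem lintegral_horocycle (hψ : Measurable ψ) :
    ∫⁻ v : Fin 2 → ℝ, ∫⁻ t, ψ (horocycle v t) = ENNReal.ofReal Real.pi *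
      ∫⁻ p in {p : ℝ × ℝ | 0 < p.2}, ψ (p.1 + p.2 * I) * ENNReal.ofReal (1 / p.2 ^ 2) := by
  set M : ℝ → ENNReal := fun y ↦ ∫⁻ x : ℝ, ψ (x + y * I)
  have measurable_M : Measurable M := by
    refine Measurable.lintegral_prod_right' (f := fun p : ℝ × ℝ ↦ ψ (p.2 + p.1 * I)) ?_
    fun_prop
  have measurable_inner : Measurable fun v : Fin 2 → ℝ ↦ ∫⁻ t, ψ (horocycle v t) :=
    (hψ.comp measurable_horocycle).lintegral_prod_right'
  calc ∫⁻ v : Fin 2 → ℝ, ∫⁻ t, ψ (horocycle v t)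
      = ∫⁻ c : ℝ, ∫⁻ a : ℝ, ∫⁻ t, ψ (horocycle ![a, c] t) := by
        rw [← ((volume_preserving_finTwoArrow ℝ).symm _).lintegral_comp measurable_inner,
          Measure.volume_eq_prod]
        exact lintegral_prod_symm _
          (measurable_inner.comp (MeasurableEquiv.measurable _)).aemeasurable
    _ = ∫⁻ c : ℝ, ∫⁻ t : ℝ, ENNReal.ofReal |c| * M ((1 + t ^ 2) * c ^ 2)⁻¹ := by
        refine lintegral_congr_ae ?_
        filter_upwards [Measure.ae_ne volume 0] with c hc
        exact lintegral_horocycle_fixed_entry hψ hc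
    _ = ∫⁻ t : ℝ, ENNReal.ofReal (1 + t ^ 2)⁻¹ *
          ∫⁻ y in Set.Ioi (0 : ℝ), M y * ENNReal.ofReal (1 / y ^ 2) := by
        rw [lintegral_lintegral_swap (by fun_prop)]
        exact lintegral_congr fun t ↦ lintegral_abs_mul_comp_inv_mul_sq M (by positivity)
    _ = _ := by
        rw [lintegral_mul_const _ (by fun_prop), ← ofReal_integral_eq_lintegral_ofReal
          integrable_inv_one_add_sq (.of_forall fun t ↦ by positivity),
          integral_univ_inv_one_add_sq, setLIntegral_upperHalfPlane_eq hψ]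

variable {φ : ℂ → ℝ}

lemma horocycleIntegral_nonneg (hnonneg : 0 ≤ φ) (v : Fin 2 → ℝ) : 0 ≤ horocycleIntegral φ v :=
  integral_nonneg fun _ ↦ hnonneg _

namespace IsHorocycleTestFunction

lemma ofReal_horocycleIntegral (hφ : IsHorocycleTestFunction φ) (hnonneg : 0 ≤ φ)
    (v : Fin 2 → ℝ) :
    ENNReal.ofReal (horocycleIntegral φ v) = ∫⁻ t, ENNReal.ofReal (φ (horocycle v t)) :=
  ofReal_integral_eq_lintegral_ofReal (hφ.integrable_comp_horocycle v)
    (.of_forall fun _ ↦ hnonneg _)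

theorem integral_horocycleIntegral (hφ : IsHorocycleTestFunction φ) (hnonneg : 0 ≤ φ) :
    ∫ v, horocycleIntegral φ v =
      Real.pi * ∫ p in {p : ℝ × ℝ | 0 < p.2}, φ (p.1 + p.2 * I) / p.2 ^ 2 := by
  have hmeas := hφ.measurable
  have measurable_integrand :
      Measurable fun p : ℝ × ℝ ↦ φ (p.1 + p.2 * I) / p.2 ^ 2 := by fun_prop
  have density (p : ℝ × ℝ) : ENNReal.ofReal (φ (p.1 + p.2 * I) / p.2 ^ 2) =
      ENNReal.ofReal (φ (p.1 + p.2 * I)) * ENNReal.ofReal (1 / p.2 ^ 2) := by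
    rw [← ENNReal.ofReal_mul (hnonneg _), mul_one_div]
  rw [integral_eq_lintegral_of_nonneg_ae (.of_forall (horocycleIntegral_nonneg hnonneg))
      hφ.continuous_horocycleIntegral.aestronglyMeasurable,
    integral_eq_lintegral_of_nonneg_ae (f := fun p : ℝ × ℝ ↦ φ (p.1 + p.2 * I) / p.2 ^ 2)
      (.of_forall fun p ↦ div_nonneg (hnonneg _) (sq_nonneg p.2))
      measurable_integrand.aestronglyMeasurable]
  simp_rw [hφ.ofReal_horocycleIntegral hnonneg, density]
  rw [lintegral_horocycle hmeas.ennreal_ofReal, ENNReal.toReal_mul,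
    ENNReal.toReal_ofReal Real.pi_pos.le]

end IsHorocycleTestFunction

end HyperbolicArea

section Unfolding

open scoped MatrixGroups

lemma isPrimitiveVector_col_zero (γ : SL(2, ℤ)) : IsPrimitiveVector fun i ↦ γ i 0 := by
  rw [isPrimitiveVector_fin_two_iff]
  refine ⟨γ 1 1, -γ 0 1, ?_⟩
  have hdet := γ.det_coe
  rw [Matrix.det_fin_two] at hdet
  linear_combination hdet

lemma exists_col_zero_eq (v : {v : Fin 2 → ℤ // IsPrimitiveVector v}) :
    ∃ γ : SL(2, ℤ), (fun i ↦ γ i 0) = v.1 := by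
  obtain ⟨γ, top, bottom⟩ := (isPrimitiveVector_fin_two_iff.1 v.2).exists_SL2_col 0
  refine ⟨γ, funext fun i ↦ ?_⟩
  fin_cases i
  exacts [top, bottom]

/-- A chosen matrix of `SL(2,ℤ)` with first column `v`: a representative of the coset of the
stabiliser of the cusp at infinity that is attached to `v`. -/
noncomputable def columnCompletion (v : {v : Fin 2 → ℤ // IsPrimitiveVector v}) : SL(2, ℤ) :=
  (exists_col_zero_eq v).choose

lemma columnCompletion_apply_zero (v : {v : Fin 2 → ℤ // IsPrimitiveVector v}) (i : Fin 2) :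
    columnCompletion v i 0 = v.1 i :=
  congrFun (exists_col_zero_eq v).choose_spec i

lemma mul_T_zpow_apply_zero (γ : SL(2, ℤ)) (n : ℤ) (i : Fin 2) :
    (γ * ModularGroup.T ^ n) i 0 = γ i 0 := by
  rw [Matrix.SpecialLinearGroup.coe_mul, ModularGroup.coe_T_zpow]
  simp [Matrix.mul_apply, Fin.sum_univ_two]

lemma eq_T_zpow_of_col_zero_eq {γ : SL(2, ℤ)} (h00 : γ 0 0 = 1) (h10 : γ 1 0 = 0) :
    γ = ModularGroup.T ^ γ 0 1 := by
  have h11 : γ 1 1 = 1 := by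
    have hdet := γ.det_coe
    rwa [Matrix.det_fin_two, h00, h10, mul_zero, sub_zero, one_mul] at hdet
  refine Subtype.ext ((Matrix.eta_fin_two γ.1).trans ?_)
  rw [ModularGroup.coe_T_zpow, h00, h10, h11]

lemma exists_eq_mul_T_zpow {γ δ : SL(2, ℤ)} (hcol : ∀ i, γ i 0 = δ i 0) :
    ∃ n : ℤ, γ = δ * ModularGroup.T ^ n := by
  have col_eq (i : Fin 2) : (δ⁻¹ * γ) i 0 = (δ⁻¹ * δ) i 0 := by
    simp only [Matrix.SpecialLinearGroup.coe_mul, Matrix.mul_apply, hcol]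
  simp only [inv_mul_cancel] at col_eq
  exact ⟨_, inv_mul_eq_iff_eq_mul.1 (eq_T_zpow_of_col_zero_eq (col_eq 0) (col_eq 1))⟩

lemma bijective_columnCompletion_mul_T_zpow : Function.Bijective
    fun p : {v : Fin 2 → ℤ // IsPrimitiveVector v} × ℤ ↦
      columnCompletion p.1 * ModularGroup.T ^ p.2 := by
  constructor
  · rintro ⟨v, m⟩ ⟨w, n⟩ heq
    dsimp only at heq
    have hvw : v = w := by
      refine Subtype.ext (funext fun i ↦ ?_)
      rw [← columnCompletion_apply_zero, ← columnCompletion_apply_zero,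
        ← mul_T_zpow_apply_zero _ m, heq, mul_T_zpow_apply_zero]
    subst hvw
    have shear := congrArg (fun γ : SL(2, ℤ) ↦ γ.1 0 1) (mul_left_cancel heq)
    simp only [ModularGroup.coe_T_zpow] at shear
    exact Prod.ext rfl shear
  · intro γ
    obtain ⟨n, hn⟩ := exists_eq_mul_T_zpow fun i ↦
      (columnCompletion_apply_zero ⟨_, isPrimitiveVector_col_zero γ⟩ i).symm
    exact ⟨⟨_, n⟩, hn.symm⟩

instance : Countable SL(2, ℤ) := bijective_columnCompletion_mul_T_zpow.2.countable

lemma exists_coe_smul_vadd_eq_horocycle (γ : SL(2, ℤ)) (z : UpperHalfPlane) :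
    ∃ s : ℝ, ∀ x : ℝ, (↑(γ • (x +ᵥ z)) : ℂ) =
      horocycle (latticePoint √z.im fun i ↦ γ i 0) (x / z.im + s) := by
  set r := √z.im
  have r_pos : 0 < r := Real.sqrt_pos.2 z.im_pos
  have r_ne : (r : ℂ) ≠ 0 := ofReal_ne_zero.2 r_pos.ne'
  have im_eq : z.im = r ^ 2 := (Real.sq_sqrt z.im_pos.le).symm
  have hdet : (r * γ 0 0) * ((γ 1 0 * z.re + γ 1 1) / r) -
      (γ 0 0 * z.re + γ 0 1) / r * (r * γ 1 0) = (1 : ℝ) := by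
    have det_int := γ.det_coe
    rw [Matrix.det_fin_two] at det_int
    have det_real : (γ 0 0 * γ 1 1 - γ 0 1 * γ 1 0 : ℝ) = 1 := by exact_mod_cast det_int
    field_simp
    linear_combination det_real
  have col_eq : latticePoint r (fun i ↦ γ i 0) = ![r * γ 0 0, r * γ 1 0] := by
    ext i
    fin_cases i <;> rfl
  have z_eq : (z : ℂ) = z.re + r ^ 2 * I := by
    rw [← ofReal_pow, ← im_eq]
    exact (re_add_im (z : ℂ)).symm
  rw [col_eq]
  refine ⟨_, fun x ↦ Eq.trans ?_ (mul_add_div_mul_add_eq_horocycle hdet (x / z.im))⟩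
  rw [UpperHalfPlane.coe_specialLinearGroup_apply, UpperHalfPlane.coe_vadd,
    ← mul_div_mul_left _ _ (inv_ne_zero r_ne), im_eq, z_eq]
  push_cast [algebraMap_int_eq, eq_intCast]
  congr 1 <;> field_simp <;> ring

lemma tsum_setLIntegral_Ioc_add_intCast (G : ℝ → ENNReal) :
    ∑' n : ℤ, ∫⁻ x in Set.Ioc (0 : ℝ) 1, G (x + n) = ∫⁻ x, G x := by
  rw [← setLIntegral_univ, ← iUnion_Ioc_intCast, lintegral_iUnion (fun _ ↦ measurableSet_Ioc)
    (Set.pairwise_disjoint_Ioc_intCast ℝ)]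
  refine tsum_congr fun n ↦ ?_
  simpa [Set.preimage_add_const_Ioc] using
    (measurePreserving_add_right volume (n : ℝ)).setLIntegral_comp_preimage_emb
      (measurableEmbedding_addRight (n : ℝ)) G (Set.Ioc (n : ℝ) (n + 1))

theorem tsum_lintegral_smul_vadd {ψ : ℂ → ENNReal} (hψ : Measurable ψ) (z : UpperHalfPlane) :
    ∑' γ : SL(2, ℤ), ∫⁻ x in Set.Ioc (0 : ℝ) 1, ψ ↑(γ • (x +ᵥ z)) =
      ENNReal.ofReal z.im * ∑' v : {v : Fin 2 → ℤ // IsPrimitiveVector v},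
        ∫⁻ t, ψ (horocycle (latticePoint √z.im v.1) t) := by
  rw [← (Equiv.ofBijective _ bijective_columnCompletion_mul_T_zpow).tsum_eq, ENNReal.tsum_prod',
    ← ENNReal.tsum_mul_left]
  refine tsum_congr fun v ↦ ?_
  obtain ⟨s, hs⟩ := exists_coe_smul_vadd_eq_horocycle (columnCompletion v) z
  simp only [columnCompletion_apply_zero] at hs
  have orbit (n : ℤ) (x : ℝ) :
      (↑((columnCompletion v * ModularGroup.T ^ n) • (x +ᵥ z)) : ℂ) =
        horocycle (latticePoint √z.im v.1) ((x + n) / z.im + s) := by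
    rw [mul_smul, UpperHalfPlane.modular_T_zpow_smul, vadd_vadd, hs, add_comm x]
  simp only [Equiv.ofBijective_apply, orbit]
  rw [tsum_setLIntegral_Ioc_add_intCast fun x ↦
      ψ (horocycle (latticePoint √z.im v.1) (x / z.im + s)),
    lintegral_comp_div_add (F := fun t ↦ ψ (horocycle (latticePoint √z.im v.1) t))
      (hψ.comp measurable_horocycle.of_uncurry_left) z.im_pos.ne', abs_of_pos z.im_pos]

theorem IsHorocycleTestFunction.tsum_lintegral_smul_vadd_eq_primitiveSum {φ : ℂ → ℝ}
    (hφ : IsHorocycleTestFunction φ) (hnonneg : 0 ≤ φ) (z : UpperHalfPlane) :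
    ∑' γ : SL(2, ℤ), ∫⁻ x in Set.Ioc (0 : ℝ) 1, ENNReal.ofReal (φ ↑(γ • (x +ᵥ z))) =
      ENNReal.ofReal (primitiveSum (horocycleIntegral φ) √z.im) := by
  have hsummable : Summable fun v : {v : Fin 2 → ℤ // IsPrimitiveVector v} ↦
      horocycleIntegral φ (latticePoint √z.im v.1) :=
    (summable_of_hasFiniteSupport (hasFiniteSupport_comp_latticePoint
      hφ.hasCompactSupport_horocycleIntegral (Real.sqrt_pos.2 z.im_pos).ne')).subtype _
  rw [tsum_lintegral_smul_vadd hφ.measurable.ennreal_ofReal, primitiveSum,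
    Fintype.card_fin, Real.sq_sqrt z.im_pos.le, ENNReal.ofReal_mul z.im_pos.le,
    ENNReal.ofReal_tsum_of_nonneg (fun _ ↦ horocycleIntegral_nonneg hnonneg _) hsummable]
  simp only [hφ.ofReal_horocycleIntegral hnonneg]

lemma ae_comp_div_add {P : ℝ → Prop} (h : ∀ᵐ t : ℝ, P t) {c : ℝ} (hc : c ≠ 0) (s : ℝ) :
    ∀ᵐ x : ℝ, P (x / c + s) := by
  have dilate : Measure.QuasiMeasurePreserving (c⁻¹ * · : ℝ → ℝ) := by
    refine ⟨by fun_prop, ?_⟩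
    rw [Real.map_volume_mul_left (inv_ne_zero hc)]
    exact Measure.smul_absolutelyContinuous
  have translate := (measurePreserving_add_right (volume : Measure ℝ) s).quasiMeasurePreserving
  simpa only [div_eq_inv_mul, Function.comp_apply] using (translate.comp dilate).ae h

lemma col_zero_ne_zero (γ : SL(2, ℤ)) : (fun i ↦ γ i 0) ≠ 0 := by
  intro hcol
  have hcop := isPrimitiveVector_fin_two_iff.1 (isPrimitiveVector_col_zero γ)
  rw [congrFun hcol 0, congrFun hcol 1] at hcop
  exact not_isCoprime_zero_zero hcop

lemma ae_forall_smul_vadd {P : ℂ → Prop}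
    (hP : ∀ v : Fin 2 → ℝ, v ≠ 0 → ∀ᵐ t, P (horocycle v t)) (z : UpperHalfPlane) :
    ∀ᵐ x : ℝ, ∀ γ : SL(2, ℤ), P ↑(γ • (x +ᵥ z)) := by
  refine ae_all_iff.2 fun γ ↦ ?_
  obtain ⟨s, hs⟩ := exists_coe_smul_vadd_eq_horocycle γ z
  have hcol : latticePoint √z.im (fun i ↦ γ i 0) ≠ 0 := by
    rw [← latticePoint_zero_right (h := √z.im),
      (isClosedEmbedding_latticePoint (Real.sqrt_pos.2 z.im_pos).ne').injective.ne_iff]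
    exact col_zero_ne_zero γ
  simpa only [hs] using ae_comp_div_add (hP _ hcol) z.im_pos.ne' s

end Unfolding
section FundamentalDomain

open UpperHalfPlane ModularGroup
open scoped MatrixGroups Modular

lemma ae_horocycle_mem_fdo_of_mem_fd {v : Fin 2 → ℝ} (hv : v ≠ 0) :
    ∀ᵐ t : ℝ, horocycle v t ∈ UpperHalfPlane.coe '' 𝒟 →
      horocycle v t ∈ UpperHalfPlane.coe '' 𝒟ᵒ := by
  filter_upwards [ae_horocycle_notMem_geodesic (A := 0) (B := 1) (C := -1 / 2) (by norm_num) hv,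
    ae_horocycle_notMem_geodesic (A := 0) (B := 1) (C := 1 / 2) (by norm_num) hv,
    ae_horocycle_notMem_geodesic (A := 1) (B := 0) (C := -1) (by norm_num) hv]
    with t right_side left_side arc
  rintro ⟨z, ⟨one_le, re_le⟩, hz⟩
  rw [← hz] at right_side left_side arc ⊢
  refine Set.mem_image_of_mem _ ⟨one_le.lt_of_ne fun h ↦ arc ?_, re_le.lt_of_ne fun h ↦ ?_⟩
  · rw [← h]
    norm_num
  · rcases (abs_eq (by norm_num)).1 h with h | h
    · exact right_side (by rw [coe_re, h]; norm_num)
    · exact left_side (by rw [coe_re, h]; norm_num)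

/-- The restriction of `f` to the open standard fundamental domain of `SL(2,ℤ)`, extended by
zero. -/
noncomputable def restrictFdo (f : ℂ → ℝ) : ℂ → ℝ := (UpperHalfPlane.coe '' 𝒟ᵒ).indicator f

lemma isOpen_coe_fdo : IsOpen (UpperHalfPlane.coe '' 𝒟ᵒ) :=
  isOpenEmbedding_coe.isOpenMap _ isOpen_fdo

lemma coe_fdo_subset : UpperHalfPlane.coe '' 𝒟ᵒ ⊆ {z : ℂ | 0 < z.im} := by
  rintro _ ⟨z, -, rfl⟩
  exact z.im_pos

lemma coe_truncatedFundamentalDomain_subset (Y : ℝ) :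
    UpperHalfPlane.coe '' truncatedFundamentalDomain Y ⊆ {z : ℂ | 0 < z.im} := by
  rintro _ ⟨z, -, rfl⟩
  exact z.im_pos

lemma isCompact_coe_truncatedFundamentalDomain (Y : ℝ) :
    IsCompact (UpperHalfPlane.coe '' truncatedFundamentalDomain Y) :=
  (isCompact_truncatedFundamentalDomain Y).image continuous_coe

lemma specialLinearGroup_ne_neg (γ : SL(2, ℤ)) : γ ≠ -γ := fun h ↦
  col_zero_ne_zero γ <| funext fun i ↦
    self_eq_neg.1 (congrFun (congrFun (congrArg Subtype.val h) i) 0)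

lemma smul_mem_fdo_iff {g : SL(2, ℤ)} {z : ℍ} (hg : g • z ∈ 𝒟ᵒ) (γ : SL(2, ℤ)) :
    γ • z ∈ 𝒟ᵒ ↔ γ = g ∨ γ = -g := by
  constructor
  · intro hγ
    have htranslate : (γ * g⁻¹) • g • z ∈ 𝒟ᵒ := by rwa [smul_smul, inv_mul_cancel_right]
    refine (eq_one_or_neg_one_of_mem_fdo_mem_fdo hg htranslate).imp ?_ ?_ <;> intro h
    · exact mul_inv_eq_one.1 h
    · rw [mul_inv_eq_iff_eq_mul.1 h, neg_one_mul]
  · rintro (rfl | rfl)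
    exacts [hg, by rwa [SL_neg_smul]]

/-- Continuous `SL(2,ℤ)`-invariant functions on the upper half-plane with compact support modulo
`SL(2,ℤ)`. By invariance, the support condition is vanishing high in the cusp. -/
structure IsModularTestFunction (f : ℂ → ℝ) : Prop where
  continuousOn : ContinuousOn f {z : ℂ | 0 < z.im}
  smul : ∀ (γ : SL(2, ℤ)) (z : ℍ), f ↑(γ • z) = f z
  cusp : ∃ Y, ∀ z : ℍ, Y < z.im → f z = 0

namespace IsModularTestFunction

variable {f : ℂ → ℝ}

lemma comp (hf : IsModularTestFunction f) {g : ℝ → ℝ} (hg : Continuous g) (hg0 : g 0 = 0) :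
    IsModularTestFunction fun z ↦ g (f z) where
  continuousOn := hg.comp_continuousOn hf.continuousOn
  smul γ z := by rw [hf.smul]
  cusp := hf.cusp.imp fun Y hY z hz ↦ by rw [hY z hz, hg0]

lemma exists_mem_coe_truncatedFundamentalDomain (hf : IsModularTestFunction f) :
    ∃ Y, ∀ z, restrictFdo f z ≠ 0 → z ∈ UpperHalfPlane.coe '' truncatedFundamentalDomain Y := by
  obtain ⟨Y, hY⟩ := hf.cusp
  refine ⟨Y, fun z hne ↦ ?_⟩
  obtain ⟨⟨w, hw, rfl⟩, hfw⟩ := Set.indicator_apply_ne_zero.1 hne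
  exact Set.mem_image_of_mem _ ⟨fdo_subset_fd hw, not_lt.1 fun hlt ↦ hfw (hY w hlt)⟩

lemma measurable_restrictFdo (hf : IsModularTestFunction f) : Measurable (restrictFdo f) := by
  classical
  rw [restrictFdo, ← Set.piecewise_eq_indicator]
  exact (hf.continuousOn.mono coe_fdo_subset).measurable_piecewise continuousOn_const
    isOpen_coe_fdo.measurableSet

lemma continuousAt_restrictFdo (hf : IsModularTestFunction f) {z : ℂ}
    (hz : z ∈ UpperHalfPlane.coe '' 𝒟 → z ∈ UpperHalfPlane.coe '' 𝒟ᵒ) :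
    ContinuousAt (restrictFdo f) z := by
  by_cases hmem : z ∈ UpperHalfPlane.coe '' 𝒟ᵒ
  · refine ((hf.continuousOn.mono coe_fdo_subset).continuousAt
      (isOpen_coe_fdo.mem_nhds hmem)).congr ?_
    filter_upwards [isOpen_coe_fdo.mem_nhds hmem] with w hw
    exact (Set.indicator_of_mem hw f).symm
  · refine (continuousAt_const (y := (0 : ℝ))).congr ?_
    filter_upwards [isClosed_coe_fd.isOpen_compl.mem_nhds (mt hz hmem)] with w hw
    exact (Set.indicator_of_notMem (fun h ↦ hw (Set.image_mono fdo_subset_fd h)) f).symm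

theorem isHorocycleTestFunction_restrictFdo (hf : IsModularTestFunction f) :
    IsHorocycleTestFunction (restrictFdo f) := by
  obtain ⟨Y, hY⟩ := hf.exists_mem_coe_truncatedFundamentalDomain
  have hK := isCompact_coe_truncatedFundamentalDomain Y
  have hK_im := coe_truncatedFundamentalDomain_subset Y
  refine ⟨hf.measurable_restrictFdo, ?_, fun v hv ↦ ?_, fun z hne ↦ hK_im (hY z hne), ?_⟩
  · obtain ⟨B, hB⟩ := hK.exists_bound_of_continuousOn (hf.continuousOn.mono hK_im)
    refine ⟨max B 0, fun z ↦ ?_⟩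
    rcases eq_or_ne (restrictFdo f z) 0 with h0 | hne
    · simp [h0]
    · exact (norm_indicator_le_norm_self f z).trans ((hB z (hY z hne)).trans (le_max_left _ _))
  · filter_upwards [ae_horocycle_mem_fdo_of_mem_fd hv] with t ht
    exact hf.continuousAt_restrictFdo ht
  · have hcont : ContinuousOn (fun z : ℂ ↦ (1 + normSq z) / z.im)
        (UpperHalfPlane.coe '' truncatedFundamentalDomain Y) :=
      ContinuousOn.div (continuous_const.add continuous_normSq).continuousOn (by fun_prop)
        fun z hz ↦ (hK_im hz).ne'
    obtain ⟨C, hC⟩ := hK.exists_bound_of_continuousOn hcont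
    exact ⟨C, fun z hne ↦ (le_abs_self _).trans (hC z (hY z hne))⟩

theorem tsum_restrictFdo_smul (hf : IsModularTestFunction f) {z : ℍ}
    (hz : ∀ γ : SL(2, ℤ), γ • z ∈ 𝒟 → γ • z ∈ 𝒟ᵒ) :
    ∑' γ : SL(2, ℤ), ENNReal.ofReal (restrictFdo f ↑(γ • z)) = 2 * ENNReal.ofReal (f z) := by
  classical
  obtain ⟨g, hg⟩ := exists_smul_mem_fd z
  have value (γ : SL(2, ℤ)) : restrictFdo f ↑(γ • z) = if γ = g ∨ γ = -g then f z else 0 := by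
    rw [restrictFdo, Set.indicator_apply, UpperHalfPlane.coe_injective.mem_set_image, hf.smul]
    simp only [smul_mem_fdo_iff (hz g hg)]
  rw [tsum_eq_sum (s := {g, -g}), Finset.sum_pair (specialLinearGroup_ne_neg g)]
  · simp only [value, true_or, or_true, if_true, two_mul]
  · intro γ hγ
    rw [value, if_neg (by simpa using hγ), ENNReal.ofReal_zero]

end IsModularTestFunction

end FundamentalDomain
section Equidistribution

open UpperHalfPlane hiding I
open ModularGroup
open scoped MatrixGroups Modular

lemma preimage_coe_fdo :
    (fun p : ℝ × ℝ ↦ (p.1 + p.2 * I : ℂ)) ⁻¹' (UpperHalfPlane.coe '' 𝒟ᵒ) = fundDom := by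
  ext p
  have hre : (p.1 + p.2 * I : ℂ).re = p.1 := by simp
  have him : (p.1 + p.2 * I : ℂ).im = p.2 := by simp
  rw [coe_fdo, fundDom, Set.mem_preimage, Set.mem_ofPred_eq, Set.mem_ofPred_eq,
    ← one_lt_normSq_iff, normSq_add_mul_I, hre, him]
  tauto

lemma measurableSet_fundDom : MeasurableSet fundDom := by
  rw [← preimage_coe_fdo]
  exact (isOpen_coe_fdo.preimage (by fun_prop)).measurableSet

lemma restrictFdo_add_mul_I (f : ℂ → ℝ) (p : ℝ × ℝ) :
    restrictFdo f (p.1 + p.2 * I) = fundDom.indicator (fun p ↦ f (p.1 + p.2 * I)) p := by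
  rw [restrictFdo, ← preimage_coe_fdo]
  exact (Set.indicator_comp_right (fun p : ℝ × ℝ ↦ (p.1 + p.2 * I : ℂ))).symm

lemma setIntegral_restrictFdo (f : ℂ → ℝ) :
    ∫ p in {p : ℝ × ℝ | 0 < p.2}, restrictFdo f (p.1 + p.2 * I) / p.2 ^ 2 =
      ∫ p in fundDom, f (p.1 + p.2 * I) / p.2 ^ 2 := by
  have fundDom_subset : fundDom ⊆ {p : ℝ × ℝ | 0 < p.2} := fun p hp ↦ hp.2.2
  rw [← Set.inter_eq_right.2 fundDom_subset, ← setIntegral_indicator measurableSet_fundDom]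
  simp only [restrictFdo_add_mul_I, div_eq_mul_inv, Set.indicator_mul_left]

namespace IsModularTestFunction

variable {f : ℂ → ℝ}

lemma of_forall_int
    (hcont : ContinuousOn f {z : ℂ | 0 < z.im})
    (hinv : ∀ a b c d : ℤ, a * d - b * c = 1 → ∀ z : ℂ, 0 < z.im →
      f ((a * z + b) / (c * z + d)) = f z)
    (hcusp : ∃ Y, ∀ z : ℂ, 0 < z.im → Y < z.im → f z = 0) : IsModularTestFunction f where
  continuousOn := hcont
  smul γ z := by
    have hdet := γ.det_coe
    rw [Matrix.det_fin_two] at hdet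
    rw [coe_specialLinearGroup_apply]
    exact hinv _ _ _ _ hdet z z.im_pos
  cusp := hcusp.imp fun Y hY z ↦ hY z z.im_pos

lemma continuous_comp_vadd (hf : IsModularTestFunction f) (z : ℍ) :
    Continuous fun x : ℝ ↦ f ↑(x +ᵥ z) :=
  hf.continuousOn.comp_continuous (by simp only [coe_vadd]; fun_prop) fun x ↦ (x +ᵥ z).im_pos

lemma intervalIntegrable_horocycle (hf : IsModularTestFunction f) {ε : ℝ} (hε : 0 < ε) :
    IntervalIntegrable (fun x : ℝ ↦ f (x + ε * I)) volume 0 1 :=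
  (hf.continuous_comp_vadd ⟨ε * I, by simpa using hε⟩).intervalIntegrable 0 1

theorem two_mul_lintegral_horocycle (hf : IsModularTestFunction f) (hnonneg : 0 ≤ f) (z : ℍ) :
    2 * ∫⁻ x in Set.Ioc (0 : ℝ) 1, ENNReal.ofReal (f ↑(x +ᵥ z)) =
      ENNReal.ofReal (primitiveSum (horocycleIntegral (restrictFdo f)) √z.im) := by
  have hφ := hf.isHorocycleTestFunction_restrictFdo
  have hφ_nonneg : 0 ≤ restrictFdo f := Set.indicator_nonneg fun w _ ↦ hnonneg w
  have hmeas (γ : SL(2, ℤ)) :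
      Measurable fun x : ℝ ↦ ENNReal.ofReal (restrictFdo f ↑(γ • (x +ᵥ z))) := by
    obtain ⟨s, hs⟩ := exists_coe_smul_vadd_eq_horocycle γ z
    simp only [hs]
    exact ((hφ.measurable_comp_horocycle _).comp (by fun_prop)).ennreal_ofReal
  rw [← hφ.tsum_lintegral_smul_vadd_eq_primitiveSum hφ_nonneg,
    ← lintegral_tsum fun γ ↦ (hmeas γ).aemeasurable,
    ← lintegral_const_mul' _ _ ENNReal.ofNat_ne_top]
  refine lintegral_congr_ae (ae_restrict_of_ae ?_)
  filter_upwards [ae_forall_smul_vadd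
    (P := fun w ↦ w ∈ UpperHalfPlane.coe '' 𝒟 → w ∈ UpperHalfPlane.coe '' 𝒟ᵒ)
    (fun v hv ↦ ae_horocycle_mem_fdo_of_mem_fd hv) z] with x hx
  simp only [UpperHalfPlane.coe_injective.mem_set_image] at hx
  exact (hf.tsum_restrictFdo_smul hx).symm

theorem integral_horocycle_eq_primitiveSum (hf : IsModularTestFunction f) (hnonneg : 0 ≤ f)
    {ε : ℝ} (hε : 0 < ε) :
    ∫ x in (0 : ℝ)..1, f (x + ε * I) =
      primitiveSum (horocycleIntegral (restrictFdo f)) √ε / 2 := by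
  let z : ℍ := ⟨ε * I, by simpa using hε⟩
  have z_im : z.im = ε := by simp [z, UpperHalfPlane.im]
  have unfolded := congrArg ENNReal.toReal (hf.two_mul_lintegral_horocycle hnonneg z)
  have sum_nonneg : 0 ≤ primitiveSum (horocycleIntegral (restrictFdo f)) √ε :=
    mul_nonneg (by positivity) (tsum_nonneg fun v ↦
      horocycleIntegral_nonneg (Set.indicator_nonneg fun w _ ↦ hnonneg w) _)
  rw [z_im, ENNReal.toReal_mul, ENNReal.toReal_ofNat, ENNReal.toReal_ofReal sum_nonneg,
    ← integral_eq_lintegral_of_nonneg_ae (f := fun x : ℝ ↦ f ↑(x +ᵥ z))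
      (.of_forall fun x ↦ hnonneg _) (hf.continuous_comp_vadd z).aestronglyMeasurable] at unfolded
  rw [intervalIntegral.integral_of_le zero_le_one, ← unfolded, mul_div_cancel_left₀ _ two_ne_zero]
  rfl

lemma integrableOn_fundDom (hf : IsModularTestFunction f) :
    IntegrableOn (fun p : ℝ × ℝ ↦ f (p.1 + p.2 * I) / p.2 ^ 2) fundDom := by
  obtain ⟨Y, hY⟩ := hf.exists_mem_coe_truncatedFundamentalDomain
  set K : Set (ℝ × ℝ) := Complex.equivRealProd ''
    (UpperHalfPlane.coe '' truncatedFundamentalDomain Y)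
  have isCompact_K : IsCompact K := (isCompact_coe_truncatedFundamentalDomain Y).image
    Complex.equivRealProdCLM.continuous
  have K_im : ∀ p ∈ K, 0 < p.2 := by
    rintro _ ⟨_, ⟨z, -, rfl⟩, rfl⟩
    exact z.im_pos
  have continuousOn_K : ContinuousOn (fun p : ℝ × ℝ ↦ f (p.1 + p.2 * I) / p.2 ^ 2) K :=
    (hf.continuousOn.comp (by fun_prop) fun p hp ↦ by simpa using K_im p hp).div (by fun_prop)
      fun p hp ↦ pow_ne_zero _ (K_im p hp).ne'
  refine (continuousOn_K.integrableOn_compact isCompact_K).of_forall_sdiff_eq_zero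
    measurableSet_fundDom ?_
  rintro p ⟨hp, hpK⟩
  by_contra hne
  refine hpK ⟨p.1 + p.2 * I, hY _ ?_, by simp [Complex.equivRealProd]⟩
  rw [restrictFdo_add_mul_I, Set.indicator_of_mem hp]
  exact fun h0 ↦ hne (by rw [h0, zero_div])

theorem tendsto_integral_horocycle_of_nonneg (hf : IsModularTestFunction f) (hnonneg : 0 ≤ f) :
    Tendsto (fun ε : ℝ ↦ ∫ x in (0 : ℝ)..1, f (x + ε * I)) (𝓝[>] 0)
      (𝓝 (3 / Real.pi * ∫ p in fundDom, f (p.1 + p.2 * I) / p.2 ^ 2)) := by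
  have hφ := hf.isHorocycleTestFunction_restrictFdo
  have tendsto_sqrt : Tendsto Real.sqrt (𝓝[>] 0) (𝓝[>] 0) := by
    refine tendsto_nhdsWithin_iff.2 ⟨?_, ?_⟩
    · simpa using (Real.continuous_sqrt.tendsto 0).mono_left nhdsWithin_le_nhds
    · filter_upwards [self_mem_nhdsWithin] with ε hε
      exact Real.sqrt_pos.2 hε
  have limit := (hφ.tendsto_primitiveSum_horocycleIntegral.comp tendsto_sqrt).div_const 2
  rw [hφ.integral_horocycleIntegral (Set.indicator_nonneg fun w _ ↦ hnonneg w),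
    setIntegral_restrictFdo] at limit
  convert limit.congr' ?_ using 2
  · set J := ∫ p in fundDom, f (p.1 + p.2 * I) / p.2 ^ 2
    field_simp
    ring
  · filter_upwards [self_mem_nhdsWithin] with ε hε
    exact (hf.integral_horocycle_eq_primitiveSum hnonneg hε).symm

end IsModularTestFunction

end Equidistribution

theorem closed_horocycles_equidistribute
    (f : ℂ → ℝ)
    (hcont : ContinuousOn f {z : ℂ | 0 < z.im})
    (hinv : ∀ a b c d : ℤ, a * d - b * c = 1 → ∀ z : ℂ, 0 < z.im →
      f (((a : ℂ) * z + b) / ((c : ℂ) * z + d)) = f z)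
    (hsupp : ∃ Y : ℝ, 0 < Y ∧ ∀ z : ℂ, 0 < z.im →
      (∃ a b c d : ℤ, a * d - b * c = 1 ∧
        Y < ((((a : ℂ) * z + b) / ((c : ℂ) * z + d)).im)) → f z = 0) :
    Filter.Tendsto (fun ε : ℝ => ∫ x in (0 : ℝ)..1, f ((x : ℂ) + ε * Complex.I))
      (nhdsWithin 0 (Set.Ioi 0))
      (nhds ((3 / Real.pi) * ∫ p in fundDom, f ((p.1 : ℂ) + p.2 * Complex.I) / p.2 ^ 2)) := by
  have hf : IsModularTestFunction f := .of_forall_int hcont hinv <|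
    hsupp.imp fun Y hY z hz hYz ↦ hY.2 z hz ⟨1, 0, 0, 1, by norm_num, by simpa using hYz⟩
  have hpos := hf.comp continuous_posPart posPart_zero
  have hneg := hf.comp continuous_negPart negPart_zero
  have limit := (hpos.tendsto_integral_horocycle_of_nonneg fun z ↦ posPart_nonneg _).sub
    (hneg.tendsto_integral_horocycle_of_nonneg fun z ↦ negPart_nonneg _)
  rw [← mul_sub, ← integral_sub hpos.integrableOn_fundDom hneg.integrableOn_fundDom] at limit
  simp only [← sub_div, posPart_sub_negPart] at limit
  refine limit.congr' ?_
  filter_upwards [self_mem_nhdsWithin] with ε hε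
  rw [← intervalIntegral.integral_sub (hpos.intervalIntegrable_horocycle hε)
    (hneg.intervalIntegrable_horocycle hε)]
  simp only [posPart_sub_negPart]
end

section
/- As ε → 0⁺, (L(ε) − 3/π)/√ε → 0; that is, L(ε) = 3/π + o(√ε). -/
/-- `L ε = 2√ε · Σ_{q ≥ 1, q² ≤ 1/ε} φ(q)·√(1/q² − ε)`. -/
noncomputable def L (ε : ℝ) : ℝ :=
  2 * Real.sqrt ε *
    ∑' q : ℕ, if 1 ≤ q ∧ (q : ℝ) ^ 2 ≤ 1 / ε then
      (Nat.totient q : ℝ) * Real.sqrt (1 / (q : ℝ) ^ 2 - ε) else 0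

/-!
Put `X = 1 / √ε`. Since `φ(q) / q = ∑_{d ∣ q} μ(d) / d`, the sum defining `L ε` equals
`∑_{d ≤ X} μ(d) / d · F(X / d)`, where `F(Y) = ∑_{1 ≤ m ≤ Y} √(1 - (m / Y)²)`. Comparing sums and
integrals of concave functions gives `F(Y) = π Y / 4 - 1 / 2 + O(Y^(-1/2))`, and
`∑ μ(d) / d² = 6 / π²` then yields the main term `3 X / (2π)`.

An error `o(1)` needs `∑ μ(d) / d = 0`, i.e. the prime number theorem: because `ζ` has no zero on
`Re s = 1`, the Laplace transform of `u ↦ ∑_{n ≤ exp u} μ(n) / n` extends continuously to the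
imaginary axis, and a Tauberian theorem applies. That theorem smooths with a kernel whose Fourier
transform has compact support, uses the Riemann–Lebesgue lemma, and undoes the smoothing by slow
oscillation. The expansion of `F` is used for `d ≤ δ X`, and Abel summation for `δ X < d ≤ X`, where
`F(X / d)` is monotone and bounded.
-/

open MeasureTheory Filter Topology FourierTransform Set
open scoped ArithmeticFunction.Moebius SchwartzMap

section Tauberian

variable {E : Type*} [NormedAddCommGroup E]

/-- Slow oscillation at infinity in additive form, the Tauberian condition: `g y` is close to `g x`
when `x` is large and `y` is within a fixed distance of `x`. -/
def SlowlyOscillating (g : ℝ → E) : Prop :=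
  ∀ ε > 0, ∃ δ > 0, ∀ᶠ x in atTop, ∀ y, |y - x| ≤ δ → ‖g y - g x‖ ≤ ε

variable [NormedSpace ℂ E]

/-- The one-sided Laplace transform; only the values of `g` on `(0, ∞)` matter. -/
noncomputable def laplaceTransform (g : ℝ → E) (s : ℂ) : E :=
  ∫ u in Ioi (0 : ℝ), Complex.exp (-s * u) • g u

lemma laplaceTransform_exp_smul (g : ℝ → E) (s z : ℂ) :
    laplaceTransform (fun u : ℝ => Complex.exp (-z * u) • g u) s = laplaceTransform g (z + s) := by
  refine integral_congr_ae (Eventually.of_forall fun u => ?_)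
  simp only [smul_smul, ← Complex.exp_add]
  ring_nf

lemma integrableOn_exp_smul {g : ℝ → E} {C : ℝ} {s : ℂ}
    (hg : AEStronglyMeasurable g (volume.restrict (Ioi 0))) (hC : ∀ u > 0, ‖g u‖ ≤ C)
    (hs : 0 < s.re) : IntegrableOn (fun u : ℝ => Complex.exp (-s * u) • g u) (Ioi 0) :=
  Integrable.smul_bdd (integrableOn_exp_mul_complex_Ioi (by simpa using hs) 0) C hg
    (ae_restrict_of_forall_mem measurableSet_Ioi hC)

lemma tendsto_laplaceTransform_nhdsGT_zero {f : ℝ → E} (hf : IntegrableOn f (Ioi 0)) :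
    Tendsto (fun σ : ℝ => laplaceTransform f σ) (𝓝[>] 0) (𝓝 (∫ u in Ioi 0, f u)) := by
  refine tendsto_integral_filter_of_dominated_convergence (fun u => ‖f u‖) ?_ ?_ hf.norm ?_
  · refine Eventually.of_forall fun σ => AEStronglyMeasurable.smul ?_ hf.aestronglyMeasurable
    exact Continuous.aestronglyMeasurable (by fun_prop)
  · filter_upwards [self_mem_nhdsWithin] with σ (hσ : 0 < σ)
    filter_upwards [ae_restrict_mem measurableSet_Ioi] with u (hu : 0 < u)
    have hexp : ‖Complex.exp (-σ * u)‖ ≤ 1 := by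
      simpa [Complex.norm_exp] using (mul_pos hσ hu).le
    simpa [norm_smul] using mul_le_of_le_one_left (norm_nonneg (f u)) hexp
  · refine Eventually.of_forall fun u => ?_
    have hcont : Continuous fun σ : ℝ => Complex.exp (-σ * u) • f u := by fun_prop
    simpa using (hcont.tendsto 0).mono_left nhdsWithin_le_nhds

lemma continuousOn_fourier_smul_vertical_line {ψ : ℝ → ℂ} {G : ℂ → E} (hψ : Continuous ψ)
    (hψs : HasCompactSupport ψ) (hG : ContinuousOn G {s | 0 ≤ s.re}) (w : ℝ) :
    ContinuousOn (fun σ : ℝ => 𝓕 (fun t : ℝ => ψ t • G (σ + 2 * Real.pi * t * Complex.I)) w)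
      (Ici 0) := by
  simp_rw [Real.fourier_real_eq_integral_exp_smul]
  refine continuousOn_integral_of_compact_support hψs ?_ fun σ t _ ht => ?_
  · refine ContinuousOn.smul (by fun_prop) (ContinuousOn.smul (by fun_prop) ?_)
    refine hG.comp (by fun_prop) fun p hp => ?_
    simpa using hp.1
  · rw [image_eq_zero_of_notMem_tsupport ht, zero_smul, smul_zero]

lemma fourier_comp_div (ψ : ℝ → E) {c : ℝ} (hc : 0 < c) (w : ℝ) :
    𝓕 (fun t => ψ (t / c)) w = c • 𝓕 ψ (c * w) := by
  simp_rw [Real.fourier_real_eq_integral_exp_smul]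
  rw [← abs_of_pos hc, ← Measure.integral_comp_div, abs_of_pos hc]
  congr 1 with t
  congr 4
  field_simp

lemma integral_abs_pow_mul_norm_fourier_comp_div (ψ : ℝ → E) {c : ℝ} (hc : 0 < c) (k : ℕ) :
    ∫ w, |w| ^ k * ‖𝓕 (fun t => ψ (t / c)) w‖ = (c ^ k)⁻¹ * ∫ w, |w| ^ k * ‖𝓕 ψ w‖ := by
  have hscale (w : ℝ) : |w| ^ k * ‖𝓕 (fun t => ψ (t / c)) w‖ =
      (c * (c ^ k)⁻¹) * (|c * w| ^ k * ‖𝓕 ψ (c * w)‖) := by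
    rw [fourier_comp_div ψ hc, norm_smul, Real.norm_of_nonneg hc.le, abs_mul, abs_of_pos hc,
      mul_pow]
    field_simp
  simp_rw [hscale]
  rw [integral_const_mul, Measure.integral_comp_mul_left (fun w => |w| ^ k * ‖𝓕 ψ w‖),
    abs_of_pos (inv_pos.2 hc), smul_eq_mul]
  field_simp

lemma integrable_fourier_schwartzMap (ψ : 𝓢(ℝ, E)) : Integrable (𝓕 (ψ : ℝ → E)) := by
  rw [← SchwartzMap.fourier_coe]
  exact (𝓕 ψ).integrable

lemma integrable_abs_mul_norm_fourier_schwartzMap (ψ : 𝓢(ℝ, E)) :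
    Integrable fun w => |w| * ‖𝓕 (ψ : ℝ → E) w‖ := by
  have hmoment := (𝓕 ψ).integrable_pow_mul volume 1
  simpa only [pow_one, Real.norm_eq_abs, SchwartzMap.fourier_coe] using hmoment

variable [CompleteSpace E]

lemma setIntegral_fourier_sub_smul {ψ : ℝ → ℂ} {f : ℝ → E} (hψ : Integrable ψ)
    (hf : IntegrableOn f (Ioi 0)) (x : ℝ) :
    ∫ u in Ioi 0, 𝓕 ψ (u - x) • f u =
      𝓕 (fun t : ℝ => ψ t • laplaceTransform f (2 * Real.pi * t * Complex.I)) (-x) := by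
  let e (t u : ℝ) : ℂ := Complex.exp (((-2 * Real.pi * t * (u - x) : ℝ) : ℂ) * Complex.I)
  have hinteg : Integrable (fun p : ℝ × ℝ => e p.2 p.1 • ψ p.2 • f p.1)
      ((volume.restrict (Ioi 0)).prod volume) := by
    refine (hψ.smul_prod hf).swap.bdd_smul 1 ?_ (Eventually.of_forall fun p => ?_)
    · exact Continuous.aestronglyMeasurable (by fun_prop)
    · rw [Complex.norm_exp_ofReal_mul_I]
  calc ∫ u in Ioi 0, 𝓕 ψ (u - x) • f u
      = ∫ u in Ioi 0, ∫ t, e t u • ψ t • f u := by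
        congr 1 with u
        rw [Real.fourier_real_eq_integral_exp_smul, ← integral_smul_const]
        simp only [smul_assoc, e]
    _ = ∫ t, ∫ u in Ioi 0, e t u • ψ t • f u := integral_integral_swap hinteg
    _ = _ := by
        rw [Real.fourier_real_eq_integral_exp_smul]
        refine integral_congr_ae (Eventually.of_forall fun t => ?_)
        simp only [laplaceTransform, ← integral_smul]
        refine integral_congr_ae (Eventually.of_forall fun u => ?_)
        simp only [smul_smul, e]
        rw [mul_left_comm _ (ψ t), mul_comm _ (ψ t), ← Complex.exp_add]
        congr 3
        push_cast
        ring

lemma setIntegral_fourier_sub_smul_of_laplaceTransform_eq {g : ℝ → E} {C : ℝ} {G : ℂ → E}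
    (hg : AEStronglyMeasurable g (volume.restrict (Ioi 0))) (hC : ∀ u > 0, ‖g u‖ ≤ C)
    (hG : ContinuousOn G {s | 0 ≤ s.re}) (hgG : ∀ s : ℂ, 0 < s.re → laplaceTransform g s = G s)
    {ψ : ℝ → ℂ} (hψ : Continuous ψ) (hψs : HasCompactSupport ψ) (hψF : Integrable (𝓕 ψ)) (x : ℝ) :
    ∫ u in Ioi 0, 𝓕 ψ (u - x) • g u =
      𝓕 (fun t : ℝ => ψ t • G (2 * Real.pi * t * Complex.I)) (-x) := by
  have hinteg : IntegrableOn (fun u => 𝓕 ψ (u - x) • g u) (Ioi 0) :=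
    (hψF.comp_sub_right x).integrableOn.smul_bdd C hg
      (ae_restrict_of_forall_mem measurableSet_Ioi hC)
  have hlim := (continuousOn_fourier_smul_vertical_line hψ hψs hG (-x) 0 self_mem_Ici).mono
    Ioi_subset_Ici_self
  simp only [ContinuousWithinAt, Complex.ofReal_zero, zero_add] at hlim
  refine tendsto_nhds_unique (tendsto_laplaceTransform_nhdsGT_zero hinteg) (hlim.congr' ?_)
  filter_upwards [self_mem_nhdsWithin] with σ (hσ : 0 < σ)
  have hσg := setIntegral_fourier_sub_smul (hψ.integrable_of_hasCompactSupport hψs)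
    (integrableOn_exp_smul hg hC (s := σ) (by simpa using hσ)) x
  have hline (t : ℝ) : laplaceTransform g (σ + 2 * Real.pi * t * Complex.I) =
      G (σ + 2 * Real.pi * t * Complex.I) := hgG _ (by simpa using hσ)
  simp only [laplaceTransform_exp_smul, hline] at hσg
  simp only [laplaceTransform, smul_comm _ (𝓕 ψ _), hσg]

lemma tendsto_setIntegral_fourier_sub_smul {g : ℝ → E} {C : ℝ} {G : ℂ → E}
    (hg : AEStronglyMeasurable g (volume.restrict (Ioi 0))) (hC : ∀ u > 0, ‖g u‖ ≤ C)
    (hG : ContinuousOn G {s | 0 ≤ s.re}) (hgG : ∀ s : ℂ, 0 < s.re → laplaceTransform g s = G s)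
    {ψ : ℝ → ℂ} (hψ : Continuous ψ) (hψs : HasCompactSupport ψ) (hψF : Integrable (𝓕 ψ)) :
    Tendsto (fun x => ∫ u in Ioi 0, 𝓕 ψ (u - x) • g u) atTop (𝓝 0) := by
  simp_rw [setIntegral_fourier_sub_smul_of_laplaceTransform_eq hg hC hG hgG hψ hψs hψF]
  refine (Real.zero_at_infty_fourier _).comp ?_
  rw [cocompact_eq_atBot_atTop]
  exact tendsto_neg_atTop_atBot.mono_right le_sup_left

lemma integral_fourier_eq_apply_zero (ψ : 𝓢(ℝ, E)) : ∫ w, 𝓕 (ψ : ℝ → E) w = ψ 0 := by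
  have hinv := congrFun (ψ.continuous.fourierInv_fourier_eq ψ.integrable
    (integrable_fourier_schwartzMap ψ)) 0
  simpa [Real.fourierInv_eq'] using hinv

lemma exists_hasCompactSupport_schwartzMap_apply_zero_eq_one :
    ∃ ψ : 𝓢(ℝ, ℂ), HasCompactSupport ψ ∧ ψ 0 = 1 := by
  let f : ContDiffBump (0 : ℝ) := ⟨1, 2, one_pos, one_lt_two⟩
  have hsupp : HasCompactSupport fun t => (f t : ℂ) :=
    f.hasCompactSupport.comp_left Complex.ofReal_zero
  refine ⟨hsupp.toSchwartzMap (Complex.ofRealCLM.contDiff.comp f.contDiff), hsupp, ?_⟩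
  exact congrArg Complex.ofReal (f.one_of_mem_closedBall (by simp [f.rIn_pos.le]))

lemma exists_schwartzMap_fourier_concentrated : ∃ B : ℝ, ∀ η > 0, ∃ ψ : 𝓢(ℝ, ℂ),
    HasCompactSupport ψ ∧ ∫ w, 𝓕 (ψ : ℝ → ℂ) w = 1 ∧ ∫ w, ‖𝓕 (ψ : ℝ → ℂ) w‖ ≤ B ∧
      ∫ w, |w| * ‖𝓕 (ψ : ℝ → ℂ) w‖ ≤ η := by
  obtain ⟨ψ, hψs, hψ0⟩ := exists_hasCompactSupport_schwartzMap_apply_zero_eq_one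
  let M := ∫ w, |w| * ‖𝓕 (ψ : ℝ → ℂ) w‖
  have : 0 ≤ M := integral_nonneg fun w => by positivity
  refine ⟨∫ w, ‖𝓕 (ψ : ℝ → ℂ) w‖, fun η hη => ?_⟩
  obtain ⟨c, hc, hcM⟩ : ∃ c > 0, c⁻¹ * M ≤ η := by
    refine ⟨(M + 1) / η, by positivity, ?_⟩
    rw [inv_div, div_mul_eq_mul_div, div_le_iff₀ (by positivity)]
    nlinarith
  let e : ℝ ≃L[ℝ] ℝ := ContinuousLinearEquiv.unitsEquivAut ℝ (Units.mk0 c⁻¹ (inv_ne_zero hc.ne'))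
  let φ : 𝓢(ℝ, ℂ) := SchwartzMap.compCLMOfContinuousLinearEquiv ℂ e ψ
  have hφ : (φ : ℝ → ℂ) = fun t => ψ (t / c) := by ext t; simp [φ, e, div_eq_mul_inv]
  refine ⟨φ, hψs.comp_homeomorph e.toHomeomorph, ?_, ?_, ?_⟩
  · rw [integral_fourier_eq_apply_zero]
    simpa [hφ] using hψ0
  · simpa [hφ] using (integral_abs_pow_mul_norm_fourier_comp_div ψ hc 0).le
  · simpa [hφ] using
      (integral_abs_pow_mul_norm_fourier_comp_div ψ hc 1).trans_le (by simpa using hcM)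

lemma norm_sub_integral_smul_le {h : ℝ → E} {K : ℝ → ℂ} {C δ ε x : ℝ}
    (hh : AEStronglyMeasurable h) (hC : ∀ y, ‖h y‖ ≤ C) (hK : Integrable K)
    (hK1 : Integrable fun w => |w| * ‖K w‖) (hKone : ∫ w, K w = 1) (hδ : 0 < δ) (hε : 0 ≤ ε)
    (hosc : ∀ w, |w| ≤ δ → ‖h (x + w) - h x‖ ≤ ε) :
    ‖h x - ∫ w, K w • h (x + w)‖ ≤ ε * (∫ w, ‖K w‖) + 2 * C / δ * ∫ w, |w| * ‖K w‖ := by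
  have hC0 : 0 ≤ C := (norm_nonneg _).trans (hC 0)
  have hpoint (w : ℝ) : ‖h x - h (x + w)‖ ≤ ε + 2 * C / δ * |w| := by
    rcases le_or_gt |w| δ with hw | hw
    · rw [norm_sub_rev]
      exact (hosc w hw).trans (le_add_of_nonneg_right (by positivity))
    · have hfar : 2 * C ≤ 2 * C / δ * |w| := by
        rw [div_mul_eq_mul_div, le_div_iff₀ hδ]
        gcongr
      linarith [norm_sub_le (h x) (h (x + w)), hC x, hC (x + w)]
  have hinteg : Integrable fun w => K w • h (x + w) := hK.smul_bdd C
    (hh.comp_quasiMeasurePreserving (quasiMeasurePreserving_add_left volume x))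
    (Eventually.of_forall fun w => hC _)
  have hdiff : h x - ∫ w, K w • h (x + w) = ∫ w, K w • (h x - h (x + w)) := by
    simp_rw [smul_sub]
    rw [integral_sub (hK.smul_const _) hinteg, integral_smul_const, hKone, one_smul]
  rw [hdiff, ← integral_const_mul, ← integral_const_mul,
    ← integral_add (hK.norm.const_mul ε) (hK1.const_mul _)]
  refine norm_integral_le_of_norm_le ((hK.norm.const_mul ε).add (hK1.const_mul _))
    (Eventually.of_forall fun w => ?_)
  calc ‖K w • (h x - h (x + w))‖ ≤ ‖K w‖ * (ε + 2 * C / δ * |w|) := by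
        rw [norm_smul]
        gcongr
        exact hpoint w
    _ = ε * ‖K w‖ + 2 * C / δ * (|w| * ‖K w‖) := by ring

lemma norm_sub_setIntegral_fourier_sub_smul_le {g : ℝ → E} {C δ ε x : ℝ} (ψ : 𝓢(ℝ, ℂ))
    (hg : AEStronglyMeasurable g (volume.restrict (Ioi 0))) (hC : ∀ u > 0, ‖g u‖ ≤ C)
    (hψ : ∫ w, 𝓕 (ψ : ℝ → ℂ) w = 1) (hδ : 0 < δ) (hδx : δ < x) (hε : 0 ≤ ε)
    (hosc : ∀ y, |y - x| ≤ δ → ‖g y - g x‖ ≤ ε) :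
    ‖g x - ∫ u in Ioi 0, 𝓕 (ψ : ℝ → ℂ) (u - x) • g u‖ ≤
      ε * (∫ w, ‖𝓕 (ψ : ℝ → ℂ) w‖) + 2 * C / δ * ∫ w, |w| * ‖𝓕 (ψ : ℝ → ℂ) w‖ := by
  let h : ℝ → E := (Ioi 0).indicator g
  have hh : ∀ y > 0, h y = g y := fun y hy => indicator_of_mem hy g
  have hhC (y : ℝ) : ‖h y‖ ≤ C := by
    rcases lt_or_ge 0 y with hy | hy
    · rw [hh y hy]
      exact hC y hy
    · simp only [h, indicator_of_notMem (notMem_Ioi.2 hy), norm_zero]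
      exact (norm_nonneg _).trans (hC 1 one_pos)
  have hhosc (w : ℝ) (hw : |w| ≤ δ) : ‖h (x + w) - h x‖ ≤ ε := by
    rw [hh x (hδ.trans hδx), hh (x + w) (by linarith [neg_abs_le w])]
    exact hosc _ (by simpa using hw)
  have hconv : ∫ u in Ioi 0, 𝓕 (ψ : ℝ → ℂ) (u - x) • g u =
      ∫ w, 𝓕 (ψ : ℝ → ℂ) w • h (x + w) := by
    rw [← integral_indicator measurableSet_Ioi, ← integral_add_left_eq_self _ x]
    simp only [h, indicator_smul_apply, add_sub_cancel_left]
  rw [hconv, ← hh x (hδ.trans hδx)]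
  refine norm_sub_integral_smul_le ((aestronglyMeasurable_indicator_iff measurableSet_Ioi).2 hg)
    hhC (integrable_fourier_schwartzMap ψ) (integrable_abs_mul_norm_fourier_schwartzMap ψ) hψ hδ hε
    hhosc

theorem tendsto_zero_of_laplaceTransform_continuousOn {g : ℝ → E} {C : ℝ} {G : ℂ → E}
    (hg : AEStronglyMeasurable g (volume.restrict (Ioi 0))) (hC : ∀ u > 0, ‖g u‖ ≤ C)
    (hslow : SlowlyOscillating g) (hG : ContinuousOn G {s | 0 ≤ s.re})
    (hgG : ∀ s : ℂ, 0 < s.re → laplaceTransform g s = G s) : Tendsto g atTop (𝓝 0) := by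
  obtain ⟨B, hB⟩ := exists_schwartzMap_fourier_concentrated
  have hC0 : 0 ≤ C := (norm_nonneg _).trans (hC 1 one_pos)
  rw [NormedAddGroup.tendsto_nhds_zero]
  intro ε hε
  obtain ⟨ε', hε', hε'B⟩ : ∃ ε' > 0, ε' * |B| ≤ ε / 3 := by
    refine ⟨ε / 3 / (|B| + 1), by positivity, ?_⟩
    rw [div_mul_eq_mul_div]
    exact div_le_of_le_mul₀ (by positivity) (by positivity) (by gcongr; linarith)
  obtain ⟨δ, hδ, hosc⟩ := hslow ε' hε'
  obtain ⟨η, hη, hηC⟩ : ∃ η > 0, 2 * C / δ * η ≤ ε / 3 := by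
    refine ⟨ε / 3 / (2 * C / δ + 1), by positivity, ?_⟩
    rw [← mul_div_assoc, mul_comm]
    exact div_le_of_le_mul₀ (by positivity) (by positivity) (by gcongr; linarith)
  obtain ⟨ψ, hψs, hψ1, hψB, hψη⟩ := hB η hη
  have hlim := NormedAddGroup.tendsto_nhds_zero.1
    (tendsto_setIntegral_fourier_sub_smul hg hC hG hgG ψ.continuous hψs
      (integrable_fourier_schwartzMap ψ)) (ε / 3) (by positivity)
  filter_upwards [hosc, hlim, eventually_gt_atTop δ] with x hxosc hxlim hδx
  have happrox := norm_sub_setIntegral_fourier_sub_smul_le ψ hg hC hψ1 hδ hδx hε'.le hxosc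
  have hfirst : ε' * ∫ w, ‖𝓕 (ψ : ℝ → ℂ) w‖ ≤ ε / 3 :=
    (mul_le_mul_of_nonneg_left (hψB.trans (le_abs_self B)) hε'.le).trans hε'B
  have hsecond : 2 * C / δ * ∫ w, |w| * ‖𝓕 (ψ : ℝ → ℂ) w‖ ≤ ε / 3 :=
    (mul_le_mul_of_nonneg_left hψη (by positivity)).trans hηC
  linarith [norm_sub_norm_le (g x) (∫ u in Ioi 0, 𝓕 (ψ : ℝ → ℂ) (u - x) • g u)]

end Tauberian

section DirichletSeries

/-- The summatory function `∑_{1 ≤ n ≤ x} a n` in the logarithmic variable `u = log x`. -/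
noncomputable def logSummatory {M : Type*} [AddCommMonoid M] (a : ℕ → M) (u : ℝ) : M :=
  ∑ n ∈ Finset.Ioc 0 ⌊Real.exp u⌋₊, a n

lemma stronglyMeasurable_logSummatory {M : Type*} [AddCommMonoid M] [TopologicalSpace M]
    (a : ℕ → M) : StronglyMeasurable (logSummatory a) :=
  (StronglyMeasurable.of_discrete (f := fun N : ℕ => ∑ n ∈ Finset.Ioc 0 N, a n)).comp_measurable
    (Nat.measurable_floor.comp Real.measurable_exp)

lemma LSeriesSummable_of_norm_le_div {a : ℕ → ℂ} {C : ℝ} {s : ℂ} (ha : ∀ n ≠ 0, ‖a n‖ ≤ C / n)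
    (hs : 0 < s.re) : LSeriesSummable a s :=
  LSeriesSummable_of_le_const_mul_rpow hs
    ⟨C, fun n hn => by simpa [Real.rpow_neg_one, div_eq_mul_inv] using ha n hn⟩

lemma laplaceTransform_logSummatory {a : ℕ → ℂ} {B : ℝ} {s : ℂ}
    (hB : ∀ N, ‖∑ n ∈ Finset.Ioc 0 N, a n‖ ≤ B) (hs : 0 < s.re) (ha : LSeriesSummable a s) :
    laplaceTransform (logSummatory a) s = LSeries a s / s := by
  have hs0 : s ≠ 0 := Complex.ne_zero_of_re_pos hs
  have hO : (fun N => ∑ n ∈ Finset.Icc 1 N, a n) =O[atTop] fun N : ℕ => (N : ℝ) ^ (0 : ℝ) :=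
    Asymptotics.IsBigO.of_bound B (Eventually.of_forall fun N => by simpa using! hB N)
  rw [LSeries_eq_mul_integral a le_rfl hs ha hO, mul_div_cancel_left₀ _ hs0, ← Real.exp_zero,
    ← integral_comp_exp_Ioi, laplaceTransform]
  congr 1 with u
  have hpow : (Real.exp u : ℂ) ^ (-(s + 1)) = Complex.exp (-(s + 1) * u) := by
    rw [Complex.cpow_def_of_ne_zero (by simp),
      ← Complex.ofReal_log (Real.exp_pos u).le, Real.log_exp, mul_comm]
  have hexp : Complex.exp (-s * u) = Complex.exp u * Complex.exp (-(s + 1) * u) := by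
    rw [← Complex.exp_add]
    ring_nf
  rw [hpow, hexp, Complex.real_smul, Complex.ofReal_exp, mul_left_comm, smul_eq_mul, mul_comm]
  rfl

section SlowOscillation

variable {E : Type*} [NormedAddCommGroup E] {a : ℕ → E} {C : ℝ}

lemma norm_sum_Ioc_floor_le (ha : ∀ n ≠ 0, ‖a n‖ ≤ C / n) {x y : ℝ} (hx : 0 < x) (hxy : x ≤ y) :
    ‖∑ n ∈ Finset.Ioc ⌊x⌋₊ ⌊y⌋₊, a n‖ ≤ C * (y - x + 1) / x := by
  have hC : 0 ≤ C := (norm_nonneg (a 1)).trans (by simpa using ha 1 one_ne_zero)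
  have hterm (n : ℕ) (hn : n ∈ Finset.Ioc ⌊x⌋₊ ⌊y⌋₊) : ‖a n‖ ≤ C / x := by
    have hn1 := (Finset.mem_Ioc.1 hn).1
    exact (ha n (by lia)).trans (by gcongr; exact (Nat.lt_of_floor_lt hn1).le)
  have hcard : ((⌊y⌋₊ - ⌊x⌋₊ : ℕ) : ℝ) ≤ y - x + 1 := by
    rw [Nat.cast_sub (Nat.floor_le_floor hxy)]
    linarith [Nat.floor_le (hx.le.trans hxy), Nat.lt_floor_add_one x]
  calc ‖∑ n ∈ Finset.Ioc ⌊x⌋₊ ⌊y⌋₊, a n‖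
      ≤ (Finset.Ioc ⌊x⌋₊ ⌊y⌋₊).card • (C / x) :=
        (norm_sum_le _ _).trans (Finset.sum_le_card_nsmul _ _ _ hterm)
    _ ≤ (y - x + 1) * (C / x) := by
        rw [Nat.card_Ioc, nsmul_eq_mul]
        gcongr
    _ = C * (y - x + 1) / x := by ring

lemma norm_logSummatory_sub_le (ha : ∀ n ≠ 0, ‖a n‖ ≤ C / n) {x y : ℝ} (hxy : x ≤ y) :
    ‖logSummatory a y - logSummatory a x‖ ≤ C * (Real.exp (y - x) - 1 + Real.exp (-x)) := by
  have hexp := Real.exp_le_exp.2 hxy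
  rw [logSummatory, logSummatory,
    ← Finset.sum_Ioc_consecutive _ (Nat.zero_le _) (Nat.floor_le_floor hexp), add_sub_cancel_left]
  refine (norm_sum_Ioc_floor_le ha (Real.exp_pos x) hexp).trans_eq ?_
  rw [Real.exp_sub, Real.exp_neg]
  field_simp

lemma slowlyOscillating_logSummatory (ha : ∀ n ≠ 0, ‖a n‖ ≤ C / n) :
    SlowlyOscillating (logSummatory a) := by
  intro ε hε
  have hC : 0 ≤ C := (norm_nonneg (a 1)).trans (by simpa using ha 1 one_ne_zero)
  have hsmall : Tendsto (fun δ => C * (Real.exp δ - 1)) (𝓝[>] 0) (𝓝 0) := by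
    have hcont : Continuous fun δ => C * (Real.exp δ - 1) := by fun_prop
    simpa using (hcont.tendsto 0).mono_left nhdsWithin_le_nhds
  obtain ⟨δ, hδε, hδ⟩ :=
    ((hsmall.eventually (ge_mem_nhds (half_pos hε))).and self_mem_nhdsWithin).exists
  have htail : Tendsto (fun x => C * Real.exp (-(x - δ))) atTop (𝓝 0) := by
    simpa [sub_eq_add_neg] using (Real.tendsto_exp_neg_atTop_nhds_zero.comp
      (tendsto_atTop_add_const_right _ (-δ) tendsto_id)).const_mul C
  refine ⟨δ, hδ, ?_⟩
  filter_upwards [htail.eventually (ge_mem_nhds (half_pos hε))] with x hx y hy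
  obtain ⟨hyl, hyr⟩ := abs_le.1 hy
  have hbound (u v : ℝ) (huv : u ≤ v) (hδ' : v - u ≤ δ) (hu : x - δ ≤ u) :
      ‖logSummatory a v - logSummatory a u‖ ≤ ε :=
    calc _ ≤ C * (Real.exp (v - u) - 1 + Real.exp (-u)) := norm_logSummatory_sub_le ha huv
      _ ≤ C * (Real.exp δ - 1 + Real.exp (-(x - δ))) := by gcongr
      _ ≤ ε := by rw [mul_add]; linarith
  rcases le_total x y with hxy | hyx
  · exact hbound x y hxy hyr (by linarith)
  · rw [norm_sub_rev]
    exact hbound y x hyx (by linarith) (by linarith)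

end SlowOscillation

theorem tendsto_sum_of_LSeries_div_continuousOn {a : ℕ → ℂ} {B C : ℝ} {G : ℂ → ℂ}
    (hB : ∀ N, ‖∑ n ∈ Finset.Ioc 0 N, a n‖ ≤ B) (ha : ∀ n ≠ 0, ‖a n‖ ≤ C / n)
    (hG : ContinuousOn G {s | 0 ≤ s.re}) (haG : ∀ s : ℂ, 0 < s.re → LSeries a s / s = G s) :
    Tendsto (fun N => ∑ n ∈ Finset.Ioc 0 N, a n) atTop (𝓝 0) := by
  have hlim := tendsto_zero_of_laplaceTransform_continuousOn
    (stronglyMeasurable_logSummatory a).aestronglyMeasurable (fun u _ => hB _)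
    (slowlyOscillating_logSummatory ha) hG fun s hs => by
      rw [laplaceTransform_logSummatory hB hs (LSeriesSummable_of_norm_le_div ha hs), haG s hs]
  refine (hlim.comp (Real.tendsto_log_atTop.comp tendsto_natCast_atTop_atTop)).congr' ?_
  filter_upwards [eventually_gt_atTop 0] with N hN
  simp only [logSummatory, Function.comp_apply, Real.exp_log (Nat.cast_pos.2 hN), Nat.floor_natCast]

end DirichletSeries

section Moebius

lemma abs_moebius_div_le (n : ℕ) : |(μ n : ℝ) / n| ≤ 1 / n := by
  rw [abs_div, Nat.abs_cast]
  gcongr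
  exact_mod_cast ArithmeticFunction.abs_moebius_le_one

lemma sum_moebius_mul_floor {N : ℕ} (hN : N ≠ 0) :
    ∑ n ∈ Finset.Ioc 0 N, (μ n : ℝ) * (N / n : ℕ) = 1 := by
  have hsum := ArithmeticFunction.sum_Ioc_mul_zeta_eq_sum (R := ℤ) μ N
  rw [ArithmeticFunction.moebius_mul_coe_zeta, Finset.sum_eq_single 1
    (fun n _ hn => ArithmeticFunction.one_apply_ne hn)
    (fun h => absurd (Finset.mem_Ioc.2 ⟨one_pos, Nat.one_le_iff_ne_zero.2 hN⟩) h),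
    ArithmeticFunction.one_one] at hsum
  simpa only [Int.cast_one, Int.cast_sum, Int.cast_mul, Int.cast_natCast] using
    congrArg (Int.cast : ℤ → ℝ) hsum.symm

lemma abs_sum_moebius_div_mul_mod_le {N : ℕ} (hN : N ≠ 0) :
    |∑ n ∈ Finset.Ioc 0 N, (μ n : ℝ) / n * (N % n : ℕ)| ≤ N - 1 := by
  have hterm (n : ℕ) (hn : n ∈ Finset.Ioc 1 N) : |(μ n : ℝ) / n * (N % n : ℕ)| ≤ 1 := by
    have hn0 : 0 < n := one_pos.trans (Finset.mem_Ioc.1 hn).1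
    calc |(μ n : ℝ) / n * (N % n : ℕ)| ≤ 1 / n * n := by
          rw [abs_mul, Nat.abs_cast]
          gcongr
          · exact abs_moebius_div_le n
          · exact (Nat.mod_lt N hn0).le
      _ = 1 := by field_simp
  have hfirst : ∑ n ∈ Finset.Ioc 0 1, (μ n : ℝ) / n * (N % n : ℕ) = 0 :=
    (Finset.sum_singleton _ _).trans (by simp [Nat.mod_one])
  rw [← Finset.sum_Ioc_consecutive _ zero_le_one (Nat.one_le_iff_ne_zero.2 hN), hfirst, zero_add]
  simpa [Nat.cast_pred (Nat.pos_of_ne_zero hN)] using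
    (Finset.abs_sum_le_sum_abs _ _).trans (Finset.sum_le_card_nsmul _ _ _ hterm)

lemma abs_sum_moebius_div_le_one (N : ℕ) : |∑ n ∈ Finset.Ioc 0 N, (μ n : ℝ) / n| ≤ 1 := by
  rcases eq_or_ne N 0 with rfl | hN
  · simp
  have hsplit : N * ∑ n ∈ Finset.Ioc 0 N, (μ n : ℝ) / n =
      1 + ∑ n ∈ Finset.Ioc 0 N, (μ n : ℝ) / n * (N % n : ℕ) := by
    rw [← sum_moebius_mul_floor hN, ← Finset.sum_add_distrib, Finset.mul_sum]
    refine Finset.sum_congr rfl fun n hn => ?_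
    have hn0 : (n : ℝ) ≠ 0 := Nat.cast_ne_zero.2 (Finset.mem_Ioc.1 hn).1.ne'
    have hdiv : (N : ℝ) = n * (N / n : ℕ) + (N % n : ℕ) := mod_cast (Nat.div_add_mod N n).symm
    conv_lhs => rw [hdiv]
    field_simp
  have hN' : (0 : ℝ) < N := Nat.cast_pos.2 (Nat.pos_of_ne_zero hN)
  refine le_of_mul_le_mul_left ?_ hN'
  calc N * |∑ n ∈ Finset.Ioc 0 N, (μ n : ℝ) / n|
      = |1 + ∑ n ∈ Finset.Ioc 0 N, (μ n : ℝ) / n * (N % n : ℕ)| := by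
        rw [← hsplit, abs_mul, Nat.abs_cast]
    _ ≤ |1| + |∑ n ∈ Finset.Ioc 0 N, (μ n : ℝ) / n * (N % n : ℕ)| := abs_add_le _ _
    _ ≤ N * 1 := by linarith [abs_sum_moebius_div_mul_mod_le hN, abs_one (α := ℝ)]

lemma LSeries_moebius_div {s : ℂ} (hs : 0 < s.re) :
    LSeries (fun n => (μ n : ℂ) / n) s = (riemannZeta (s + 1))⁻¹ := by
  have hs1 : 1 < (s + 1).re := by simpa using hs
  have hprod := ArithmeticFunction.LSeries_zeta_mul_Lseries_moebius hs1
  rw [ArithmeticFunction.LSeries_zeta_eq_riemannZeta hs1] at hprod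
  rw [inv_eq_of_mul_eq_one_right hprod]
  refine tsum_congr fun n => ?_
  rcases eq_or_ne n 0 with rfl | hn
  · simp
  · rw [LSeries.term_of_ne_zero hn, LSeries.term_of_ne_zero hn,
      Complex.cpow_add _ _ (Nat.cast_ne_zero.2 hn), Complex.cpow_one, div_div, mul_comm]

lemma riemannZeta₁_ne_zero_of_one_le_re {s : ℂ} (hs : 1 ≤ s.re) : riemannZeta₁ s ≠ 0 := by
  rcases eq_or_ne s 1 with rfl | hs1
  · simp
  · have hzeta := riemannZeta_ne_zero_of_one_le_re hs
    rw [riemannZeta_eq_inv_sub_mul hs1] at hzeta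
    exact right_ne_zero_of_mul hzeta

theorem tendsto_sum_moebius_div :
    Tendsto (fun N => ∑ n ∈ Finset.Ioc 0 N, (μ n : ℝ) / n) atTop (𝓝 0) := by
  have hG : ContinuousOn (fun s => (riemannZeta₁ (s + 1))⁻¹) {s | 0 ≤ s.re} :=
    (differentiable_riemannZeta₁.continuous.comp (continuous_add_const 1)).continuousOn.inv₀
      fun s hs => riemannZeta₁_ne_zero_of_one_le_re (by simpa using hs)
  have hlim : Tendsto (fun N => ∑ n ∈ Finset.Ioc 0 N, (μ n : ℂ) / n) atTop (𝓝 0) := by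
    refine tendsto_sum_of_LSeries_div_continuousOn (B := 1) (C := 1)
      (fun N => mod_cast abs_sum_moebius_div_le_one N)
      (fun n _ => mod_cast abs_moebius_div_le n) hG fun s hs => ?_
    have hs0 : s ≠ 0 := Complex.ne_zero_of_re_pos hs
    rw [LSeries_moebius_div hs, riemannZeta_eq_inv_sub_mul (by simpa using hs0),
      add_sub_cancel_right]
    field_simp
  exact_mod_cast (Complex.continuous_re.tendsto 0).comp hlim

lemma hasSum_moebius_div_sq : HasSum (fun n : ℕ => (μ n : ℝ) / n / n) (6 / Real.pi ^ 2) := by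
  have hsum := (LSeriesSummable_of_norm_le_div (a := fun n => (μ n : ℂ) / n) (C := 1) (s := 1)
    (fun n _ => mod_cast abs_moebius_div_le n) (by simp)).LSeriesHasSum
  rw [LSeries_moebius_div (by simp), one_add_one_eq_two, riemannZeta_two, inv_div] at hsum
  have hterm (n : ℕ) : LSeries.term (fun n => (μ n : ℂ) / n) 1 n = ((μ n / n / n : ℝ) : ℂ) := by
    rcases eq_or_ne n 0 with rfl | hn
    · simp
    · simp [LSeries.term_of_ne_zero hn]
  rw [LSeriesHasSum, funext hterm] at hsum
  exact_mod_cast hsum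

end Moebius

section Axer

lemma norm_sum_Ioc_smul_le_of_antitoneOn {E : Type*} [NormedAddCommGroup E] [NormedSpace ℝ E]
    {z : ℕ → E} {b : ℕ → ℝ} {η : ℝ} {m : ℕ} (hz : ∀ k, ‖∑ i ∈ Finset.Ioc m k, z i‖ ≤ η)
    (hb : AntitoneOn b (Ioi m)) (hb0 : ∀ k > m, 0 ≤ b k) (n : ℕ) :
    ‖∑ i ∈ Finset.Ioc m n, b i • z i‖ ≤ η * b (m + 1) := by
  have hη : 0 ≤ η := (norm_nonneg _).trans (hz 0)
  rcases le_or_gt n m with hnm | hmn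
  · rw [Finset.Ioc_eq_empty_of_le hnm, Finset.sum_empty, norm_zero]
    exact mul_nonneg hη (hb0 _ m.lt_succ_self)
  have hparts : ‖∑ i ∈ Finset.Ioc m n, b i • z i - b n • ∑ i ∈ Finset.Ioc m n, z i‖ ≤
      η * (b (m + 1) - b n) := by
    induction n, hmn using Nat.le_induction with
    | base => simp
    | succ n hmn ih =>
      have hstep : b (n + 1) ≤ b n := hb hmn (hmn.trans n.le_succ) n.le_succ
      rw [Finset.sum_Ioc_succ_top (by lia), Finset.sum_Ioc_succ_top (by lia)]
      calc _ = ‖(∑ i ∈ Finset.Ioc m n, b i • z i - b n • ∑ i ∈ Finset.Ioc m n, z i) +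
              (b n - b (n + 1)) • ∑ i ∈ Finset.Ioc m n, z i‖ := by congr 1; module
        _ ≤ η * (b (m + 1) - b n) + (b n - b (n + 1)) * η := by
            refine norm_add_le_of_le ih ?_
            rw [norm_smul, Real.norm_of_nonneg (sub_nonneg.2 hstep)]
            exact mul_le_mul_of_nonneg_left (hz n) (sub_nonneg.2 hstep)
        _ = η * (b (m + 1) - b (n + 1)) := by ring
  calc ‖∑ i ∈ Finset.Ioc m n, b i • z i‖
      ≤ η * (b (m + 1) - b n) + b n * η := by
        refine (norm_le_norm_sub_add _ (b n • ∑ i ∈ Finset.Ioc m n, z i)).trans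
          (add_le_add hparts ?_)
        rw [norm_smul, Real.norm_of_nonneg (hb0 n hmn)]
        exact mul_le_mul_of_nonneg_left (hz n) (hb0 n hmn)
    _ = η * b (m + 1) := by ring

lemma sum_Ioc_one_div_sqrt_le (D : ℕ) : ∑ d ∈ Finset.Ioc 0 D, 1 / √(d : ℝ) ≤ 2 * √D := by
  induction D with
  | zero => simp
  | succ D ih =>
    have hstep : 1 / √(D + 1 : ℝ) ≤ 2 * √(D + 1) - 2 * √D := by
      rw [div_le_iff₀ (by positivity)]
      nlinarith [sq_nonneg (√(D + 1 : ℝ) - √D), Real.sq_sqrt (Nat.cast_nonneg (α := ℝ) D),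
        Real.sq_sqrt (show (0 : ℝ) ≤ D + 1 by positivity)]
    rw [Finset.sum_Ioc_succ_top (Nat.zero_le D)]
    push_cast
    linarith

variable {c : ℕ → ℝ} {F : ℝ → ℝ} {a b A C K δ η X : ℝ}

lemma abs_hasSum_sub_sum_Ioc_le {D : ℕ} (hA : HasSum (fun n => c n / n) A)
    (hη : ∀ k, |∑ d ∈ Finset.Ioc D k, c d| ≤ η) :
    |A - ∑ d ∈ Finset.Ioc 0 D, c d / d| ≤ η / (D + 1) := by
  have hlim : Tendsto (fun N => ∑ d ∈ Finset.Ioc D N, c d / d) atTop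
      (𝓝 (A - ∑ d ∈ Finset.Ioc 0 D, c d / d)) := by
    refine ((hA.tendsto_sum_nat.comp (tendsto_add_atTop_nat 1)).sub_const _).congr' ?_
    filter_upwards [eventually_ge_atTop D] with N hN
    rw [Function.comp_apply, Finset.range_eq_Ico, Finset.sum_eq_sum_Ico_succ_bot N.succ_pos,
      Nat.cast_zero, div_zero, zero_add, sub_eq_iff_eq_add',
      Finset.sum_Ioc_consecutive _ D.zero_le hN]
    rfl
  refine le_of_tendsto hlim.abs (Eventually.of_forall fun N => ?_)
  have hanti : AntitoneOn (fun d : ℕ => (1 : ℝ) / d) (Ioi D) := fun i hi j _ hij =>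
    one_div_le_one_div_of_le (Nat.cast_pos.2 (D.zero_le.trans_lt hi)) (Nat.cast_le.2 hij)
  have habel := norm_sum_Ioc_smul_le_of_antitoneOn (z := c) hη hanti (fun k _ => by positivity) N
  simpa [div_eq_inv_mul, mul_comm] using habel

lemma abs_sum_mul_comp_div_sub_linear_le {D : ℕ} (hc : ∀ n ≠ 0, |c n| ≤ C / n)
    (hF : ∀ Y ≥ 1, |F Y - (a * Y + b)| ≤ K / √Y) (hX : 0 < X) (hδ : δ ≤ 1) (hD : D ≤ δ * X) :
    |∑ d ∈ Finset.Ioc 0 D, c d * (F (X / d) - (a * (X / d) + b))| ≤ 2 * C * K * √δ := by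
  have hCK : 0 ≤ C * K := by
    have hC : 0 ≤ C := (abs_nonneg (c 1)).trans (by simpa using hc 1 one_ne_zero)
    have hK : 0 ≤ K := (abs_nonneg (F 1 - (a * 1 + b))).trans (by simpa using hF 1 le_rfl)
    positivity
  have hterm (d : ℕ) (hd : d ∈ Finset.Ioc 0 D) :
      |c d * (F (X / d) - (a * (X / d) + b))| ≤ C * K / √X * (1 / √d) := by
    obtain ⟨hd0, hdD⟩ := Finset.mem_Ioc.1 hd
    have hd' : (0 : ℝ) < d := Nat.cast_pos.2 hd0
    have hdX : (d : ℝ) ≤ X := by nlinarith [Nat.cast_le (α := ℝ).2 hdD]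
    calc |c d * (F (X / d) - (a * (X / d) + b))| ≤ C / d * (K / √(X / d)) := by
          rw [abs_mul]
          have hcd := hc d hd0.ne'
          gcongr
          · exact (abs_nonneg _).trans hcd
          · exact hF _ ((one_le_div hd').2 hdX)
      _ = C * K / √X * (1 / √d) := by
          rw [Real.sqrt_div hX.le]
          field_simp
          rw [Real.sq_sqrt hd'.le]
          ring
  calc _ ≤ ∑ d ∈ Finset.Ioc 0 D, C * K / √X * (1 / √(d : ℝ)) :=
        (Finset.abs_sum_le_sum_abs _ _).trans (Finset.sum_le_sum hterm)
    _ ≤ C * K / √X * (2 * √(δ * X)) := by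
        rw [← Finset.mul_sum]
        gcongr
        exact (sum_Ioc_one_div_sqrt_le D).trans (by gcongr)
    _ = 2 * C * K * √δ := by
        rw [Real.sqrt_mul' _ hX.le]
        field_simp

lemma abs_sum_Ioc_mul_comp_div_le {D : ℕ} (hη : ∀ k, |∑ d ∈ Finset.Ioc D k, c d| ≤ η)
    (hFmono : Monotone F) (hFnonneg : ∀ y, 0 ≤ F y) (hX : 0 ≤ X) (N : ℕ) :
    |∑ d ∈ Finset.Ioc D N, c d * F (X / d)| ≤ η * F (X / (D + 1)) := by
  have hanti : AntitoneOn (fun d : ℕ => F (X / d)) (Ioi D) := fun i hi j _ hij => hFmono <|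
    div_le_div_of_nonneg_left hX (Nat.cast_pos.2 (D.zero_le.trans_lt hi)) (Nat.cast_le.2 hij)
  have habel := norm_sum_Ioc_smul_le_of_antitoneOn (z := c) hη hanti (fun k _ => hFnonneg _) N
  simpa only [smul_eq_mul, mul_comm (F _), Nat.cast_add, Nat.cast_one, Real.norm_eq_abs] using habel

lemma sum_mul_comp_div_sub_eq {D N : ℕ} (hDN : D ≤ N) :
    ∑ d ∈ Finset.Ioc 0 N, c d * F (X / d) - a * A * X =
      ∑ d ∈ Finset.Ioc D N, c d * F (X / d) +
      ∑ d ∈ Finset.Ioc 0 D, c d * (F (X / d) - (a * (X / d) + b)) +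
      b * ∑ d ∈ Finset.Ioc 0 D, c d - a * X * (A - ∑ d ∈ Finset.Ioc 0 D, c d / d) := by
  have hlinear : ∑ d ∈ Finset.Ioc 0 D, c d * (F (X / d) - (a * (X / d) + b)) =
      ∑ d ∈ Finset.Ioc 0 D, c d * F (X / d) -
        (a * X * ∑ d ∈ Finset.Ioc 0 D, c d / d + b * ∑ d ∈ Finset.Ioc 0 D, c d) := by
    rw [Finset.mul_sum, Finset.mul_sum, ← Finset.sum_add_distrib, ← Finset.sum_sub_distrib]
    exact Finset.sum_congr rfl fun d _ => by ring
  rw [← Finset.sum_Ioc_consecutive _ D.zero_le hDN, hlinear]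
  ring

lemma abs_sum_mul_comp_div_sub_le (hc : ∀ n ≠ 0, |c n| ≤ C / n)
    (hA : HasSum (fun n => c n / n) A) (hFmono : Monotone F) (hFnonneg : ∀ y, 0 ≤ F y)
    (hF : ∀ Y ≥ 1, |F Y - (a * Y + b)| ≤ K / √Y) (hX : 0 < X) (hδ0 : 0 < δ) (hδ1 : δ ≤ 1)
    (hη : |∑ d ∈ Finset.Ioc 0 ⌊δ * X⌋₊, c d| ≤ η)
    (hη' : ∀ k, |∑ d ∈ Finset.Ioc ⌊δ * X⌋₊ k, c d| ≤ η) :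
    |∑ d ∈ Finset.Ioc 0 ⌊X⌋₊, c d * F (X / d) - a * A * X| ≤
      η * (F (1 / δ) + |b| + |a| / δ) + 2 * C * K * √δ := by
  set D := ⌊δ * X⌋₊
  have hη0 : 0 ≤ η := (abs_nonneg _).trans hη
  have hXD : X / (D + 1) ≤ 1 / δ := by
    rw [div_le_div_iff₀ (by positivity) hδ0, one_mul, mul_comm]
    exact (Nat.lt_floor_add_one _).le
  have hlarge : |∑ d ∈ Finset.Ioc D ⌊X⌋₊, c d * F (X / d)| ≤ η * F (1 / δ) :=
    (abs_sum_Ioc_mul_comp_div_le hη' hFmono hFnonneg hX.le _).trans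
      (mul_le_mul_of_nonneg_left (hFmono hXD) hη0)
  have hsmall : |∑ d ∈ Finset.Ioc 0 D, c d * (F (X / d) - (a * (X / d) + b))| ≤
      2 * C * K * √δ :=
    abs_sum_mul_comp_div_sub_linear_le hc hF hX hδ1 (Nat.floor_le (by positivity))
  have hconst : |b * ∑ d ∈ Finset.Ioc 0 D, c d| ≤ |b| * η := by
    rw [abs_mul]
    gcongr
  have htail : |a * X * (A - ∑ d ∈ Finset.Ioc 0 D, c d / d)| ≤ |a| / δ * η :=
    calc _ ≤ |a| * X * (η / (D + 1)) := by
          rw [abs_mul, abs_mul, abs_of_pos hX]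
          gcongr
          exact abs_hasSum_sub_sum_Ioc_le hA hη'
      _ = |a| * (X / (D + 1)) * η := by ring
      _ ≤ |a| / δ * η := by rw [div_eq_mul_one_div |a|]; gcongr
  rw [sum_mul_comp_div_sub_eq (b := b)
    (Nat.floor_le_floor (mul_le_of_le_one_left hX.le hδ1) : D ≤ ⌊X⌋₊)]
  refine ((abs_sub _ _).trans (add_le_add_left (abs_add_three _ _ _) _)).trans ?_
  linarith

lemma eventually_abs_sum_Ioc_le (hc : Tendsto (fun N => ∑ n ∈ Finset.Ioc 0 N, c n) atTop (𝓝 0))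
    (hη : 0 < η) :
    ∀ᶠ D in atTop, |∑ d ∈ Finset.Ioc 0 D, c d| ≤ η ∧ ∀ k, |∑ d ∈ Finset.Ioc D k, c d| ≤ η := by
  have hhalf : ∀ᶠ D in atTop, |∑ d ∈ Finset.Ioc 0 D, c d| < η / 2 :=
    NormedAddGroup.tendsto_nhds_zero.1 hc (η / 2) (half_pos hη)
  filter_upwards [eventually_forall_ge_atTop.2 hhalf] with D hD
  refine ⟨by linarith [hD D le_rfl], fun k => ?_⟩
  rcases le_total k D with hkD | hDk
  · simpa [Finset.Ioc_eq_empty_of_le hkD] using hη.le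
  · rw [← add_sub_cancel_left (∑ d ∈ Finset.Ioc 0 D, c d) (∑ d ∈ Finset.Ioc D k, c d),
      Finset.sum_Ioc_consecutive _ D.zero_le hDk]
    linarith [abs_sub (∑ d ∈ Finset.Ioc 0 k, c d) (∑ d ∈ Finset.Ioc 0 D, c d), hD D le_rfl,
      hD k hDk]

theorem tendsto_sum_mul_comp_div_sub (hc : ∀ n ≠ 0, |c n| ≤ C / n)
    (hc0 : Tendsto (fun N => ∑ n ∈ Finset.Ioc 0 N, c n) atTop (𝓝 0))
    (hA : HasSum (fun n => c n / n) A) (hFmono : Monotone F) (hFnonneg : ∀ y, 0 ≤ F y)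
    (hF : ∀ Y ≥ 1, |F Y - (a * Y + b)| ≤ K / √Y) :
    Tendsto (fun X => ∑ d ∈ Finset.Ioc 0 ⌊X⌋₊, c d * F (X / d) - a * A * X) atTop (𝓝 0) := by
  rw [NormedAddGroup.tendsto_nhds_zero]
  intro ε hε
  obtain ⟨δ, hδε, hδ0, hδ1⟩ : ∃ δ, 2 * C * K * √δ < ε / 2 ∧ 0 < δ ∧ δ ≤ 1 := by
    have hcont : Continuous fun δ => 2 * C * K * √δ := by fun_prop
    have hlim : Tendsto (fun δ => 2 * C * K * √δ) (𝓝[>] 0) (𝓝 0) := by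
      simpa using (hcont.tendsto 0).mono_left nhdsWithin_le_nhds
    exact ((hlim.eventually (gt_mem_nhds (half_pos hε))).and (Ioc_mem_nhdsGT one_pos)).exists
  have hM : 0 ≤ F (1 / δ) + |b| + |a| / δ := by have := hFnonneg (1 / δ); positivity
  obtain ⟨η, hη, hηε⟩ : ∃ η > 0, η * (F (1 / δ) + |b| + |a| / δ) ≤ ε / 2 := by
    refine ⟨ε / 2 / (F (1 / δ) + |b| + |a| / δ + 1), by positivity, ?_⟩
    rw [div_mul_eq_mul_div]
    exact div_le_of_le_mul₀ (by positivity) (by positivity) 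
      (mul_le_mul_of_nonneg_left (by linarith) (by positivity))
  have hfloor : Tendsto (fun X => ⌊δ * X⌋₊) atTop atTop :=
    tendsto_nat_floor_atTop.comp (tendsto_id.const_mul_atTop hδ0)
  filter_upwards [hfloor.eventually (eventually_abs_sum_Ioc_le hc0 hη), eventually_gt_atTop 0]
    with X ⟨hhead, htail⟩ hX
  have hbound := abs_sum_mul_comp_div_sub_le hc hA hFmono hFnonneg hF hX hδ0 hδ1 hhead htail
  rw [Real.norm_eq_abs]
  linarith

end Axer

section ConcaveSums

variable {f : ℝ → ℝ}

lemma add_le_apply_add_apply_of_concaveOn {a b x : ℝ} (hf : ConcaveOn ℝ (Icc a b) f)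
    (hx : x ∈ Icc a b) : f a + f b ≤ f x + f (a + b - x) := by
  have hab : a ≤ b := hx.1.trans hx.2
  rw [← segment_eq_Icc hab] at hx
  obtain ⟨s, t, hs, ht, hst, rfl⟩ := hx
  have hreflect : a + b - (s • a + t • b) = t • a + s • b := by
    simp only [smul_eq_mul]
    linear_combination (-(a + b)) * hst
  have hleft := hf.2 (left_mem_Icc.2 hab) (right_mem_Icc.2 hab) hs ht hst
  have hright := hf.2 (left_mem_Icc.2 hab) (right_mem_Icc.2 hab) ht hs (by rwa [add_comm])
  rw [hreflect]
  simp only [smul_eq_mul] at hleft hright ⊢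
  linear_combination hleft + hright - (f a + f b) * hst

lemma apply_add_apply_le_of_concaveOn {a b x : ℝ} (hf : ConcaveOn ℝ (Icc a b) f)
    (hx : x ∈ Icc a b) : f x + f (a + b - x) ≤ 2 * f ((a + b) / 2) := by
  have hx' : a + b - x ∈ Icc a b := ⟨by linarith [hx.2], by linarith [hx.1]⟩
  have hmid := hf.2 hx hx' (one_half_pos (α := ℝ)).le one_half_pos.le (add_halves 1)
  have hpoint : (1 / 2 : ℝ) • x + (1 / 2 : ℝ) • (a + b - x) = (a + b) / 2 := by
    simp only [smul_eq_mul]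
    ring
  rw [hpoint] at hmid
  simp only [smul_eq_mul] at hmid
  linarith

lemma two_mul_integral_eq_integral_add_reflect {a b : ℝ} (hfi : IntervalIntegrable f volume a b) :
    2 * ∫ x in a..b, f x = ∫ x in a..b, (f x + f (a + b - x)) := by
  have hreflect : ∫ x in a..b, f (a + b - x) = ∫ x in a..b, f x := by simp
  rw [intervalIntegral.integral_add hfi (by simpa using (hfi.comp_sub_left (a + b)).symm),
    hreflect, two_mul]

lemma mul_add_div_two_le_integral_of_concaveOn {a b : ℝ} (hab : a ≤ b)
    (hf : ConcaveOn ℝ (Icc a b) f) (hfi : IntervalIntegrable f volume a b) :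
    (b - a) * ((f a + f b) / 2) ≤ ∫ x in a..b, f x := by
  have hmono : ∫ _ in a..b, (f a + f b) ≤ ∫ x in a..b, (f x + f (a + b - x)) :=
    intervalIntegral.integral_mono_on hab intervalIntegrable_const
      (hfi.add (by simpa using (hfi.comp_sub_left (a + b)).symm))
      fun x hx => add_le_apply_add_apply_of_concaveOn hf hx
  rw [← two_mul_integral_eq_integral_add_reflect hfi, intervalIntegral.integral_const,
    smul_eq_mul] at hmono
  linarith

lemma integral_le_mul_apply_midpoint_of_concaveOn {a b : ℝ} (hab : a ≤ b)
    (hf : ConcaveOn ℝ (Icc a b) f) (hfi : IntervalIntegrable f volume a b) :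
    ∫ x in a..b, f x ≤ (b - a) * f ((a + b) / 2) := by
  have hmono : ∫ x in a..b, (f x + f (a + b - x)) ≤ ∫ _ in a..b, 2 * f ((a + b) / 2) :=
    intervalIntegral.integral_mono_on hab
      (hfi.add (by simpa using (hfi.comp_sub_left (a + b)).symm)) intervalIntegrable_const
      fun x hx => apply_add_apply_le_of_concaveOn hf hx
  rw [← two_mul_integral_eq_integral_add_reflect hfi, intervalIntegral.integral_const,
    smul_eq_mul] at hmono
  linarith

lemma sum_Ioc_add_half_le_integral_of_concaveOn {N : ℕ} (hf : ConcaveOn ℝ (Icc 0 (N : ℝ)) f)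
    (hfi : IntervalIntegrable f volume 0 N) :
    ∑ m ∈ Finset.Ioc 0 N, f m + (f 0 - f N) / 2 ≤ ∫ x in 0..(N : ℝ), f x := by
  induction N with
  | zero => simp
  | succ N ih =>
    have hle : (N : ℝ) ≤ (N + 1 : ℕ) := Nat.cast_le.2 N.le_succ
    have hN : (N : ℝ) ∈ uIcc 0 ((N + 1 : ℕ) : ℝ) :=
      Icc_subset_uIcc ⟨N.cast_nonneg, hle⟩
    have hfi₁ := hfi.mono_set (uIcc_subset_uIcc_left hN)
    have hfi₂ := hfi.mono_set (uIcc_subset_uIcc_right hN)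
    have hprev := ih (hf.subset (Icc_subset_Icc_right hle) (convex_Icc _ _)) hfi₁
    have htrap := mul_add_div_two_le_integral_of_concaveOn hle
      (hf.subset (Icc_subset_Icc_left N.cast_nonneg) (convex_Icc _ _)) hfi₂
    rw [Finset.sum_Ioc_succ_top N.zero_le,
      ← intervalIntegral.integral_add_adjacent_intervals hfi₁ hfi₂]
    push_cast at htrap ⊢
    linarith

lemma integral_le_sum_Ioc_of_concaveOn {N : ℕ}
    (hf : ConcaveOn ℝ (Icc (1 / 2) (N + 1 / 2 : ℝ)) f)
    (hfi : IntervalIntegrable f volume (1 / 2) (N + 1 / 2)) :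
    ∫ x in (1 / 2 : ℝ)..(N + 1 / 2), f x ≤ ∑ m ∈ Finset.Ioc 0 N, f m := by
  induction N with
  | zero => simp
  | succ N ih =>
    push_cast at hf hfi ⊢
    have : (0 : ℝ) ≤ N := N.cast_nonneg
    have hN : (N + 1 / 2 : ℝ) ∈ uIcc (1 / 2 : ℝ) (N + 1 + 1 / 2) := by
      rw [uIcc_of_le (by linarith)]
      constructor <;> linarith
    have hfi₁ := hfi.mono_set (uIcc_subset_uIcc_left hN)
    have hfi₂ := hfi.mono_set (uIcc_subset_uIcc_right hN)
    have hprev := ih (hf.subset (Icc_subset_Icc_right (by linarith)) (convex_Icc _ _)) hfi₁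
    have hmid := integral_le_mul_apply_midpoint_of_concaveOn (by linarith)
      (hf.subset (Icc_subset_Icc_left (by linarith)) (convex_Icc _ _)) hfi₂
    have hcenter : ((N + 1 / 2 : ℝ) + (N + 1 + 1 / 2)) / 2 = N + 1 := by ring
    rw [hcenter] at hmid
    rw [Finset.sum_Ioc_succ_top N.zero_le,
      ← intervalIntegral.integral_add_adjacent_intervals hfi₁ hfi₂]
    push_cast
    linarith

lemma intervalIntegrable_of_antitoneOn_Icc {a b c d : ℝ} (hf : AntitoneOn f (Icc a b))
    (hac : a ≤ c) (hcd : c ≤ d) (hdb : d ≤ b) : IntervalIntegrable f volume c d := by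
  refine AntitoneOn.intervalIntegrable (hf.mono ?_)
  rw [uIcc_of_le hcd]
  exact Icc_subset_Icc hac hdb

lemma integral_le_mul_apply_left_of_antitoneOn {a b : ℝ} (hab : a ≤ b)
    (hf : AntitoneOn f (Icc a b)) : ∫ x in a..b, f x ≤ (b - a) * f a := by
  rw [← smul_eq_mul, ← intervalIntegral.integral_const]
  exact intervalIntegral.integral_mono_on hab
    (intervalIntegrable_of_antitoneOn_Icc hf le_rfl hab le_rfl) intervalIntegrable_const
    fun x hx => hf (left_mem_Icc.2 hab) hx hx.1

variable {Y : ℝ}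

lemma sum_Ioc_le_integral_sub_of_concaveOn_of_antitoneOn {N : ℕ} (hNY : N ≤ Y)
    (hconc : ConcaveOn ℝ (Icc 0 Y) f) (hanti : AntitoneOn f (Icc 0 Y))
    (hnonneg : ∀ x ∈ Icc 0 Y, 0 ≤ f x) :
    ∑ m ∈ Finset.Ioc 0 N, f m ≤ (∫ x in 0..Y, f x) - f 0 / 2 + f N / 2 := by
  have hN0 : (0 : ℝ) ≤ N := N.cast_nonneg
  have hfi := intervalIntegrable_of_antitoneOn_Icc hanti le_rfl hN0 hNY
  have htrap := sum_Ioc_add_half_le_integral_of_concaveOn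
    (hconc.subset (Icc_subset_Icc_right hNY) (convex_Icc _ _)) hfi
  have hrest : 0 ≤ ∫ x in (N : ℝ)..Y, f x :=
    intervalIntegral.integral_nonneg hNY fun x hx => hnonneg x ⟨hN0.trans hx.1, hx.2⟩
  rw [← intervalIntegral.integral_add_adjacent_intervals hfi
    (intervalIntegrable_of_antitoneOn_Icc hanti hN0 hNY le_rfl)]
  linarith

lemma integral_sub_le_sum_Ioc_add_of_concaveOn_of_antitoneOn {N : ℕ} (hNY : N + 1 / 2 ≤ Y)
    (hconc : ConcaveOn ℝ (Icc 0 Y) f) (hanti : AntitoneOn f (Icc 0 Y)) :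
    (∫ x in 0..Y, f x) - f 0 / 2 ≤
      ∑ m ∈ Finset.Ioc 0 N, f m + (Y - (N + 1 / 2)) * f (N + 1 / 2) := by
  have : (0 : ℝ) ≤ N := N.cast_nonneg
  have hfi {a b : ℝ} (ha : 0 ≤ a) (hab : a ≤ b) (hb : b ≤ Y) : IntervalIntegrable f volume a b :=
    intervalIntegrable_of_antitoneOn_Icc hanti ha hab hb
  have hfirst := integral_le_mul_apply_left_of_antitoneOn one_half_pos.le
    (hanti.mono (Icc_subset_Icc_right (by linarith)))
  have hmid := integral_le_sum_Ioc_of_concaveOn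
    (hconc.subset (Icc_subset_Icc one_half_pos.le hNY) (convex_Icc _ _))
    (hfi one_half_pos.le (by linarith) hNY)
  have hrest := integral_le_mul_apply_left_of_antitoneOn hNY
    (hanti.mono (Icc_subset_Icc_left (by linarith)))
  rw [← intervalIntegral.integral_add_adjacent_intervals (b := 1 / 2)
      (hfi le_rfl one_half_pos.le (by linarith)) (hfi one_half_pos.le (by linarith) le_rfl),
    ← intervalIntegral.integral_add_adjacent_intervals (a := 1 / 2) (b := N + 1 / 2)
      (hfi one_half_pos.le (by linarith) hNY) (hfi (by linarith) hNY le_rfl)]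
  linarith

theorem abs_sum_Ioc_sub_integral_le_of_concaveOn_of_antitoneOn (hY : 1 ≤ Y)
    (hconc : ConcaveOn ℝ (Icc 0 Y) f) (hanti : AntitoneOn f (Icc 0 Y))
    (hnonneg : ∀ x ∈ Icc 0 Y, 0 ≤ f x) :
    |∑ m ∈ Finset.Ioc 0 ⌊Y⌋₊, f m - ((∫ x in 0..Y, f x) - f 0 / 2)| ≤
      3 / 2 * f (⌊Y⌋₊ - 1 / 2) := by
  obtain ⟨N, hN⟩ : ∃ N : ℕ, ⌊Y⌋₊ = N + 1 := Nat.exists_eq_add_one.2 (Nat.floor_pos.2 hY)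
  have hfloor : ((⌊Y⌋₊ : ℕ) : ℝ) = N + 1 := mod_cast hN
  have hNY : (⌊Y⌋₊ : ℝ) ≤ Y := Nat.floor_le (zero_le_one.trans hY)
  have hYN : Y < ⌊Y⌋₊ + 1 := Nat.lt_floor_add_one Y
  have hupper := sum_Ioc_le_integral_sub_of_concaveOn_of_antitoneOn hNY hconc hanti hnonneg
  have hlower := integral_sub_le_sum_Ioc_add_of_concaveOn_of_antitoneOn (N := N) (by linarith)
    hconc hanti
  have : (0 : ℝ) ≤ N := N.cast_nonneg
  have hlast0 : 0 ≤ f ⌊Y⌋₊ := hnonneg _ ⟨Nat.cast_nonneg _, hNY⟩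
  have hlast : f ⌊Y⌋₊ ≤ f (N + 1 / 2) :=
    hanti ⟨by linarith, by linarith⟩ ⟨Nat.cast_nonneg _, hNY⟩ (by linarith)
  have hwidth : (Y - (N + 1 / 2)) * f (N + 1 / 2) ≤ 3 / 2 * f (N + 1 / 2) :=
    mul_le_mul_of_nonneg_right (by linarith) (hlast0.trans hlast)
  have hsum : ∑ m ∈ Finset.Ioc 0 ⌊Y⌋₊, f m = ∑ m ∈ Finset.Ioc 0 N, f m + f ⌊Y⌋₊ := by
    rw [hN, Finset.sum_Ioc_succ_top N.zero_le]
  have hpoint : (⌊Y⌋₊ : ℝ) - 1 / 2 = N + 1 / 2 := by linarith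
  rw [hpoint, abs_le]
  constructor <;> linarith

end ConcaveSums

section QuarterCircle

lemma concaveOn_sqrt_one_sub_div_sq (Y : ℝ) :
    ConcaveOn ℝ (Icc 0 Y) fun x => √(1 - (x / Y) ^ 2) := by
  refine ⟨convex_Icc 0 Y, fun x hx y hy s t hs ht hst => ?_⟩
  have hdisk {z : ℝ} (hz : z ∈ Icc 0 Y) : 0 ≤ 1 - (z / Y) ^ 2 := sub_nonneg.2 <|
    pow_le_one₀ (div_nonneg hz.1 (hz.1.trans hz.2)) (div_le_one_of_le₀ hz.2 (hz.1.trans hz.2))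
  refine (Real.strictConcaveOn_sqrt.concaveOn.2 (hdisk hx) (hdisk hy) hs ht hst).trans
    (Real.sqrt_le_sqrt ?_)
  have hsq := even_two.convexOn_pow.2 (mem_univ (x / Y)) (mem_univ (y / Y)) hs ht hst
  have hlin : (s • x + t • y) / Y = s • (x / Y) + t • (y / Y) := by
    simp only [smul_eq_mul]
    ring
  rw [hlin]
  simp only [smul_eq_mul] at hsq ⊢
  linarith

lemma antitoneOn_sqrt_one_sub_div_sq (Y : ℝ) :
    AntitoneOn (fun x => √(1 - (x / Y) ^ 2)) (Icc 0 Y) := by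
  intro x hx y _ hxy
  have hx0 := hx.1
  have hY : 0 ≤ Y := hx.1.trans hx.2
  dsimp only
  gcongr

lemma integral_sqrt_one_sub_sq_zero_one : ∫ x in (0 : ℝ)..1, √(1 - x ^ 2) = Real.pi / 4 := by
  have hcont : Continuous fun x : ℝ => √(1 - x ^ 2) := by fun_prop
  have heven : ∫ x in (-1 : ℝ)..0, √(1 - x ^ 2) = ∫ x in (0 : ℝ)..1, √(1 - x ^ 2) := by
    rw [← neg_zero, ← intervalIntegral.integral_comp_neg]
    simp only [neg_sq, neg_zero]
  have hdisk := integral_sqrt_one_sub_sq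
  rw [← intervalIntegral.integral_add_adjacent_intervals (hcont.intervalIntegrable _ 0)
    (hcont.intervalIntegrable _ _), heven] at hdisk
  linarith

lemma integral_sqrt_one_sub_div_sq (Y : ℝ) :
    ∫ x in 0..Y, √(1 - (x / Y) ^ 2) = Real.pi / 4 * Y := by
  rcases eq_or_ne Y 0 with rfl | hY
  · simp
  · rw [intervalIntegral.integral_comp_div (fun x => √(1 - x ^ 2)) hY, zero_div, div_self hY,
      integral_sqrt_one_sub_sq_zero_one, smul_eq_mul, mul_comm]

/-- The sum of the heights, at the integers `1, …, ⌊Y⌋`, of the quarter ellipse with half-axes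
`Y` and `1`; it is the empty sum for `Y < 1`. -/
noncomputable def quarterEllipseSum (Y : ℝ) : ℝ := ∑ m ∈ Finset.Ioc 0 ⌊Y⌋₊, √(1 - (m / Y) ^ 2)

lemma quarterEllipseSum_nonneg (Y : ℝ) : 0 ≤ quarterEllipseSum Y :=
  Finset.sum_nonneg fun _ _ => Real.sqrt_nonneg _

lemma monotone_quarterEllipseSum : Monotone quarterEllipseSum := by
  intro Y Z hYZ
  rcases lt_or_ge Y 1 with hY | hY
  · rw [quarterEllipseSum, Nat.floor_eq_zero.2 hY, Finset.Ioc_self, Finset.sum_empty]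
    exact quarterEllipseSum_nonneg Z
  calc quarterEllipseSum Y ≤ ∑ m ∈ Finset.Ioc 0 ⌊Y⌋₊, √(1 - (m / Z) ^ 2) := by
        have hZ : 0 ≤ Z := zero_le_one.trans (hY.trans hYZ)
        unfold quarterEllipseSum
        gcongr
    _ ≤ quarterEllipseSum Z := Finset.sum_le_sum_of_subset_of_nonneg
        (Finset.Ioc_subset_Ioc_right (Nat.floor_le_floor hYZ)) fun _ _ _ => Real.sqrt_nonneg _

lemma sqrt_one_sub_div_sq_le {x Y : ℝ} (hY : 0 < Y) :
    √(1 - (x / Y) ^ 2) ≤ √(2 * (Y - x)) / √Y := by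
  rw [← Real.sqrt_div' _ hY.le]
  refine Real.sqrt_le_sqrt ?_
  have hgap : 2 * (Y - x) / Y = 2 * (1 - x / Y) := by field_simp
  rw [hgap]
  nlinarith [sq_nonneg (1 - x / Y)]

theorem abs_quarterEllipseSum_sub_le {Y : ℝ} (hY : 1 ≤ Y) :
    |quarterEllipseSum Y - (Real.pi / 4 * Y + -(1 / 2))| ≤ 3 / √Y := by
  have hY0 : 0 < Y := one_pos.trans_le hY
  have hsum := abs_sum_Ioc_sub_integral_le_of_concaveOn_of_antitoneOn hY
    (concaveOn_sqrt_one_sub_div_sq Y) (antitoneOn_sqrt_one_sub_div_sq Y)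
    fun x _ => Real.sqrt_nonneg _
  have hend : √(1 - ((⌊Y⌋₊ - 1 / 2) / Y) ^ 2) ≤ 2 / √Y := by
    refine (sqrt_one_sub_div_sq_le hY0).trans ?_
    gcongr
    refine Real.sqrt_le_iff.2 ⟨zero_le_two, ?_⟩
    linarith [Nat.lt_floor_add_one Y]
  simp only [integral_sqrt_one_sub_div_sq, zero_div, zero_pow two_ne_zero, sub_zero,
    Real.sqrt_one, sub_eq_add_neg _ (1 / 2 : ℝ)] at hsum
  calc _ ≤ 3 / 2 * √(1 - ((⌊Y⌋₊ - 1 / 2) / Y) ^ 2) := hsum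
    _ ≤ 3 / 2 * (2 / √Y) := by gcongr
    _ = 3 / √Y := by ring

end QuarterCircle

section Totient

lemma sum_Ioc_sum_divisorsAntidiagonal {M : Type*} [AddCommMonoid M] (h : ℕ × ℕ → M) (N : ℕ) :
    ∑ n ∈ Finset.Ioc 0 N, ∑ x ∈ n.divisorsAntidiagonal, h x =
      ∑ d ∈ Finset.Ioc 0 N, ∑ m ∈ Finset.Ioc 0 (N / d), h (d, m) := by
  rw [Finset.sum_sigma', Finset.sum_sigma']
  refine Finset.sum_nbij' (fun p => ⟨p.2.1, p.2.2⟩) (fun p => ⟨p.1 * p.2, (p.1, p.2)⟩) ?_ ?_ ?_ ?_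
    fun _ _ => rfl
  · rintro ⟨n, d, m⟩ hp
    simp only [Finset.mem_sigma, Finset.mem_Ioc, Nat.mem_divisorsAntidiagonal] at hp ⊢
    obtain ⟨⟨-, hnN⟩, rfl, hdm⟩ := hp
    have hd : 0 < d := Nat.pos_of_ne_zero (left_ne_zero_of_mul hdm)
    have hm : 0 < m := Nat.pos_of_ne_zero (right_ne_zero_of_mul hdm)
    exact ⟨⟨hd, (Nat.le_mul_of_pos_right d hm).trans hnN⟩, hm,
      by rwa [Nat.le_div_iff_mul_le hd, mul_comm]⟩
  · rintro ⟨d, m⟩ hp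
    simp only [Finset.mem_sigma, Finset.mem_Ioc, Nat.mem_divisorsAntidiagonal] at hp ⊢
    obtain ⟨⟨hd, -⟩, hm, hmN⟩ := hp
    exact ⟨⟨Nat.mul_pos hd hm, mul_comm m d ▸ (Nat.le_div_iff_mul_le hd).1 hmN⟩, trivial,
      (Nat.mul_pos hd hm).ne'⟩
  · rintro ⟨n, d, m⟩ hp
    simp only [Finset.mem_sigma, Nat.mem_divisorsAntidiagonal] at hp
    obtain ⟨-, rfl, -⟩ := hp
    rfl
  · exact fun _ _ => rfl

lemma totient_div_eq_sum_moebius_div (q : ℕ) :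
    (q.totient : ℝ) / q = ∑ x ∈ q.divisorsAntidiagonal, (μ x.1 : ℝ) / x.1 := by
  rcases q.eq_zero_or_pos with rfl | hq
  · simp
  have hinv := (ArithmeticFunction.sum_eq_iff_sum_mul_moebius_eq (R := ℝ)
    (f := fun n => (n.totient : ℝ)) (g := fun n => (n : ℝ))).1
    (fun n _ => mod_cast Nat.sum_totient n) q hq
  rw [← hinv, Finset.sum_div]
  refine Finset.sum_congr rfl fun x hx => ?_
  obtain ⟨hxq, hq0⟩ := Nat.mem_divisorsAntidiagonal.1 hx
  have hx2 : (x.2 : ℝ) ≠ 0 := Nat.cast_ne_zero.2 (right_ne_zero_of_mul (hxq.trans_ne hq0))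
  rw [← hxq, Nat.cast_mul, mul_div_mul_right _ _ hx2]

/-- The sum over Ford disks in the normalization `X = 1 / √ε`, for which `L ε` is `2√ε` times it. -/
noncomputable def totientEllipseSum (X : ℝ) : ℝ :=
  ∑ q ∈ Finset.Ioc 0 ⌊X⌋₊, (q.totient : ℝ) / q * √(1 - (q / X) ^ 2)

lemma totientEllipseSum_eq_sum_moebius_mul (X : ℝ) :
    totientEllipseSum X =
      ∑ d ∈ Finset.Ioc 0 ⌊X⌋₊, (μ d : ℝ) / d * quarterEllipseSum (X / d) :=
  calc totientEllipseSum X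
      = ∑ q ∈ Finset.Ioc 0 ⌊X⌋₊, ∑ x ∈ q.divisorsAntidiagonal,
          (μ x.1 : ℝ) / x.1 * √(1 - ((x.1 * x.2 : ℕ) / X) ^ 2) := by
        refine Finset.sum_congr rfl fun q _ => ?_
        rw [totient_div_eq_sum_moebius_div, Finset.sum_mul]
        exact Finset.sum_congr rfl fun x hx => by rw [(Nat.mem_divisorsAntidiagonal.1 hx).1]
    _ = ∑ d ∈ Finset.Ioc 0 ⌊X⌋₊, ∑ m ∈ Finset.Ioc 0 (⌊X⌋₊ / d),
          (μ d : ℝ) / d * √(1 - ((d * m : ℕ) / X) ^ 2) :=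
        sum_Ioc_sum_divisorsAntidiagonal
          (fun x => (μ x.1 : ℝ) / x.1 * √(1 - ((x.1 * x.2 : ℕ) / X) ^ 2)) _
    _ = ∑ d ∈ Finset.Ioc 0 ⌊X⌋₊, (μ d : ℝ) / d * quarterEllipseSum (X / d) := by
        simp only [quarterEllipseSum, Nat.floor_div_natCast, Finset.mul_sum, Nat.cast_mul,
          div_div_eq_mul_div, mul_comm]

theorem tendsto_totientEllipseSum_sub :
    Tendsto (fun X => totientEllipseSum X - 3 / (2 * Real.pi) * X) atTop (𝓝 0) := by
  have hmain : Real.pi / 4 * (6 / Real.pi ^ 2) = 3 / (2 * Real.pi) := by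
    field_simp
    norm_num
  simp only [totientEllipseSum_eq_sum_moebius_mul, ← hmain]
  exact tendsto_sum_mul_comp_div_sub (fun n _ => abs_moebius_div_le n) tendsto_sum_moebius_div
    hasSum_moebius_div_sq monotone_quarterEllipseSum quarterEllipseSum_nonneg
    fun Y hY => abs_quarterEllipseSum_sub_le hY

end Totient

section FordDisks

lemma one_le_and_sq_le_one_div_iff_mem_Ioc {ε : ℝ} (hε : 0 < ε) (q : ℕ) :
    (1 ≤ q ∧ (q : ℝ) ^ 2 ≤ 1 / ε) ↔ q ∈ Finset.Ioc 0 ⌊1 / √ε⌋₊ := by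
  rw [Finset.mem_Ioc, Nat.le_floor_iff (by positivity), one_div, one_div, ← Real.sqrt_inv,
    Real.le_sqrt q.cast_nonneg (inv_nonneg.2 hε.le)]
  rfl

lemma sqrt_one_div_sq_sub {ε q : ℝ} (hε : 0 ≤ ε) (hq : 0 < q) :
    √(1 / q ^ 2 - ε) = √(1 - (q / (1 / √ε)) ^ 2) / q := by
  have hfactor : 1 / q ^ 2 - ε = (1 - (q / (1 / √ε)) ^ 2) / q ^ 2 := by
    rw [div_div_eq_mul_div, div_one, mul_pow, Real.sq_sqrt hε]
    field_simp
  rw [hfactor, Real.sqrt_div' _ (sq_nonneg q), Real.sqrt_sq hq.le]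

lemma L_eq_two_mul_sqrt_mul_totientEllipseSum {ε : ℝ} (hε : 0 < ε) :
    L ε = 2 * √ε * totientEllipseSum (1 / √ε) := by
  simp only [L, totientEllipseSum, one_le_and_sq_le_one_div_iff_mem_Ioc hε]
  rw [tsum_eq_sum fun q hq => if_neg hq]
  congr 1
  refine Finset.sum_congr rfl fun q hq => ?_
  rw [if_pos hq, sqrt_one_div_sq_sub hε.le (Nat.cast_pos.2 (Finset.mem_Ioc.1 hq).1)]
  ring

lemma tendsto_one_div_sqrt_nhdsGT_zero : Tendsto (fun ε : ℝ => 1 / √ε) (𝓝[>] 0) atTop := by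
  simpa only [Function.comp_def, Real.sqrt_inv, one_div] using
    Real.tendsto_sqrt_atTop.comp tendsto_inv_nhdsGT_zero

end FordDisks

/-- `L(ε) = 3/π + o(√ε)` as `ε → 0⁺`. -/
theorem L_littleO_sqrt :
    Filter.Tendsto (fun ε : ℝ => (L ε - 3 / Real.pi) / Real.sqrt ε)
      (nhdsWithin 0 (Set.Ioi 0)) (nhds 0) := by
  have hlim := (tendsto_totientEllipseSum_sub.comp tendsto_one_div_sqrt_nhdsGT_zero).const_mul 2
  rw [mul_zero] at hlim
  refine hlim.congr' ?_
  filter_upwards [self_mem_nhdsWithin] with ε (hε : 0 < ε)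
  have : 0 < √ε := Real.sqrt_pos.2 hε
  rw [L_eq_two_mul_sqrt_mul_totientEllipseSum hε, Function.comp_apply]
  field_simp
end
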